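/- Let (Q, 𝔫, k) be a commutative Noetherian local ring. Suppose there exists a resolution format f = (1, m, m+n−1, n) with m ≥ 3, n ≥ 1 such that: (1) there exists a grade 3 perfect ideal in Q of format f; (2) f is not Dynkin, i.e. 2(m+n−1) ≤ (m−2)(n+1); and (3) every grade 3 perfect ideal in Q of format f is licci. Then at least one of the formats (1, 6, 8, 3) or (1, 8, 9, 2) satisfies conditions (1), (2), and (3). -/

import Mathlib

/-- An ideal `I` in a commutative Noetherian local ring `Q` has **resolution format**
`(1, m, m+n-1, n)` if the minimal free resolution of `Q/I` over `Q` is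
`0 → Q^n → Q^{m+n-1} → Q^m → Q`, i.e. there is an exact complex of free modules of the
indicated ranks augmented by `Q → Q/I → 0`, which is minimal in the sense that each
differential maps into `𝔫` times the target (`𝔫` the maximal ideal).  Equivalently, the
`i`-th entry of the format is the Betti number `dim_k Tor_i^Q(Q/I, k)`. -/
def HasResolutionFormat {Q : Type*} [CommRing Q] [IsLocalRing Q]
    (I : Ideal Q) (m n : ℕ) : Prop :=
  ∃ (d1 : (Fin m → Q) →ₗ[Q] Q)
    (d2 : (Fin (m + n - 1) → Q) →ₗ[Q] (Fin m → Q))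
    (d3 : (Fin n → Q) →ₗ[Q] (Fin (m + n - 1) → Q)),
    LinearMap.range d1 = I ∧
    LinearMap.range d2 = LinearMap.ker d1 ∧
    LinearMap.range d3 = LinearMap.ker d2 ∧
    LinearMap.ker d3 = ⊥ ∧
    I ≤ IsLocalRing.maximalIdeal Q ∧
    LinearMap.range d2 ≤ (IsLocalRing.maximalIdeal Q) • (⊤ : Submodule Q (Fin m → Q)) ∧
    LinearMap.range d3 ≤ (IsLocalRing.maximalIdeal Q) • (⊤ : Submodule Q (Fin (m + n - 1) → Q))

/-- `I` is a grade `3` perfect ideal of resolution format `(1, m, m+n-1, n)`: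
`I` contains a `Q`-regular sequence of length `3`, one has `m ≥ 3` and `n ≥ 1`, and the
minimal free resolution of `Q/I` has the format `(1, m, m+n-1, n)` (in particular `Q/I`
has projective dimension `3` as a `Q`-module, since `n ≥ 1`). -/
def IsGrade3PerfectOfFormat {Q : Type*} [CommRing Q] [IsLocalRing Q]
    (I : Ideal Q) (m n : ℕ) : Prop :=
  (∃ x y z : Q, x ∈ I ∧ y ∈ I ∧ z ∈ I ∧ RingTheory.Sequence.IsRegular Q [x, y, z]) ∧
  3 ≤ m ∧ 1 ≤ n ∧ HasResolutionFormat I m n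

/-- `J` is **directly linked** to `I` if there is a `Q`-regular sequence `x₁, x₂, x₃` of
elements of `I` with `J = (x₁, x₂, x₃) : I`. -/
def DirectlyLinked {Q : Type*} [CommRing Q] (I J : Ideal Q) : Prop :=
  ∃ x y z : Q, x ∈ I ∧ y ∈ I ∧ z ∈ I ∧ RingTheory.Sequence.IsRegular Q [x, y, z] ∧
    J = Submodule.colon (Ideal.span {x, y, z}) I

/-- `J` is **linked** to `I` if there is a finite chain of ideals
`I = J₀, J₁, …, J_r = J` in which `J_{i+1}` is directly linked to `J_i` for every `i`. -/
def Linked {Q : Type*} [CommRing Q] (I J : Ideal Q) : Prop :=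
  Relation.ReflTransGen (fun A B => DirectlyLinked A B) I J

/-- `I` is **licci** if it is linked to an ideal generated by a `Q`-regular sequence of
length `3`, i.e. `I` is in the linkage class of a complete intersection ideal. -/
def Licci {Q : Type*} [CommRing Q] (I : Ideal Q) : Prop :=
  ∃ C : Ideal Q, Linked I C ∧
    ∃ x y z : Q, RingTheory.Sequence.IsRegular Q [x, y, z] ∧ C = Ideal.span {x, y, z}

/-!
If `F` resolves `Q/I` and `a₁, a₂, a₃` is a regular sequence in `I`, then the dual of the mapping
cone of a lift `Koszul(a) → F` resolves `Q/((a) : I)`. Splitting off its contractible part, whose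
size is the rank modulo `𝔫` of the lift, gives the format of the link. Write `(m, n)` for the format
`(1, m, m + n - 1, n)`.

* If `aᵢ ∈ 𝔫 I`, nothing splits off, and `(m, n)` is linked to `(n + 3, m)`.
* If the `aᵢ` are part of a minimal system of generators, `(m, n)` with `4 ≤ m` is linked to
  `(n + 3 - c, m - 3)` for some `c ≤ 3`.
* If `a₁, a₂` are minimal generators and `a₃` is replaced by `a₃²`, the link has generators `a₃²`
  and two elements coming from `F₃`, which when `2 ≤ n` can be used for a second link, and the
  result has format `(m + 1, n)`.

These moves take a complete intersection to the formats `(6, 3)` and `(8, 2)`, and one of these two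
to any given non-Dynkin format. Being licci then passes back along the linkage.
-/

open RingTheory.Sequence IsLocalRing
open scoped Pointwise Matrix
/-! ### Regular sequences with prescribed residues -/

theorem exists_mem_forall_add_notMem_of_isAntichain {Q : Type*} [CommRing Q] {S : Finset (Ideal Q)}
    (hS : ∀ P ∈ S, P.IsPrime) (hanti : IsAntichain (· ≤ ·) (S : Set (Ideal Q))) {A : Ideal Q}
    (hA : ∀ P ∈ S, ¬ A ≤ P) (l : Q) : ∃ n ∈ A, ∀ P ∈ S, l + n ∉ P := by
  classical
  -- `n` is chosen inside the primes that miss `l` and outside those that contain `l`.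
  let B : Ideal Q := A ⊓ {P ∈ S | l ∉ P}.inf id
  have hB : ∀ P ∈ S, l ∈ P → ¬ B ≤ P := by
    intro P hP hl hle
    have := hS P hP
    rcases (Ideal.IsPrime.inf_le this).1 hle with h | h
    · exact hA P hP h
    · obtain ⟨P', hP', hle'⟩ := (Ideal.IsPrime.inf_le' this).1 h
      rw [Finset.mem_filter] at hP'
      exact hP'.2 (hanti.eq hP'.1 hP hle' ▸ hl)
  have hcover : ¬ (B : Set Q) ⊆ ⋃ P ∈ ({P ∈ S | l ∈ P} : Finset (Ideal Q)), (P : Set Q) := by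
    intro hsub
    obtain ⟨P, hP, hle⟩ := (Ideal.subset_union_prime ⊥ ⊥
      fun P hP _ _ ↦ hS P (Finset.mem_filter.1 hP).1).1 hsub
    exact hB P (Finset.mem_filter.1 hP).1 (Finset.mem_filter.1 hP).2 hle
  obtain ⟨n, hnB, hn⟩ := Set.not_subset.1 hcover
  refine ⟨n, hnB.1, fun P hP hmem ↦ ?_⟩
  by_cases hl : l ∈ P
  · exact hn (Set.mem_biUnion (Finset.mem_filter.2 ⟨hP, hl⟩)
      ((Submodule.add_mem_iff_right _ hl).1 hmem))
  · have hnP : n ∈ P :=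
      (Finset.inf_le (f := id) (Finset.mem_filter.2 ⟨hP, hl⟩) : _ ≤ id P) hnB.2
    exact hl ((Submodule.add_mem_iff_left _ hnP).1 hmem)

theorem exists_mem_forall_add_notMem {Q : Type*} [CommRing Q] {S : Finset (Ideal Q)}
    (hS : ∀ P ∈ S, P.IsPrime) {A : Ideal Q} (hA : ∀ P ∈ S, ¬ A ≤ P) (l : Q) :
    ∃ n ∈ A, ∀ P ∈ S, l + n ∉ P := by
  classical
  let T : Finset (Ideal Q) := {P ∈ S | Maximal (· ∈ S) P}
  have hTS : ∀ P ∈ T, P ∈ S := fun P hP ↦ (Finset.mem_filter.1 hP).1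
  have hT : IsAntichain (· ≤ ·) (T : Set (Ideal Q)) := fun P hP P' hP' hne hle ↦
    hne ((Finset.mem_filter.1 hP).2.eq_of_le (hTS P' hP') hle)
  obtain ⟨n, hnA, hn⟩ := exists_mem_forall_add_notMem_of_isAntichain
    (fun P hP ↦ hS P (hTS P hP)) hT (fun P hP ↦ hA P (hTS P hP)) l
  refine ⟨n, hnA, fun P hP hmem ↦ ?_⟩
  obtain ⟨P', hle, hP'⟩ := S.exists_le_maximal hP
  exact hn P' (Finset.mem_filter.2 ⟨hP'.prop, hP'⟩) (hle hmem)

section RegularSequence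

variable {Q : Type*} [CommRing Q] {M : Type*} [AddCommGroup M] [Module Q M]

theorem exists_isSMulRegular_add [IsNoetherianRing Q] [Module.Finite Q M] {A : Ideal Q} {x : Q}
    (hxA : x ∈ A) (hx : IsSMulRegular M x) (l : Q) : ∃ n ∈ A, IsSMulRegular M (l + n) := by
  have hfin := associatedPrimes.finite Q M
  have isSMulRegular_iff (r : Q) : IsSMulRegular M r ↔ ∀ P ∈ associatedPrimes Q M, r ∉ P := by
    have := Set.ext_iff.1 (biUnion_associatedPrimes_eq_compl_regular Q M) r
    simpa using (not_iff_not.2 this).symm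
  obtain ⟨n, hnA, hn⟩ := exists_mem_forall_add_notMem (S := hfin.toFinset) (A := A)
    (fun P hP ↦ (hfin.mem_toFinset.1 hP).isPrime)
    (fun P hP hle ↦ (isSMulRegular_iff x).1 hx P (hfin.mem_toFinset.1 hP) (hle hxA)) l
  exact ⟨n, hnA, (isSMulRegular_iff _).2 fun P hP ↦ hn P (hfin.mem_toFinset.2 hP)⟩

variable {rs : List Q} {z l : Q}

theorem isSMulRegular_last_of_isRegular_append (h : IsRegular M (rs ++ [z])) :
    IsSMulRegular (M ⧸ (Ideal.ofList rs • ⊤ : Submodule Q M)) z :=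
  (isWeaklyRegular_singleton_iff _ z).1
    ((isWeaklyRegular_append_iff M rs [z]).1 h.toIsWeaklyRegular).2

variable [IsLocalRing Q]

theorem mem_maximalIdeal_of_isRegular (h : IsRegular M rs) {r : Q} (hr : r ∈ rs) :
    r ∈ maximalIdeal Q := by
  refine le_maximalIdeal (fun htop : Ideal.ofList rs = ⊤ ↦ h.top_ne_smul ?_)
    (Ideal.subset_span hr)
  rw [htop, Submodule.top_smul]

variable [Module.Finite Q M]

theorem isRegular_append_singleton_of_isSMulRegular (h : IsRegular M (rs ++ [z]))
    (hl : l ∈ maximalIdeal Q)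
    (hreg : IsSMulRegular (M ⧸ (Ideal.ofList rs • ⊤ : Submodule Q M)) l) :
    IsRegular M (rs ++ [l]) := by
  have : Nontrivial M := h.nontrivial
  refine IsRegular.of_isWeaklyRegular_of_mem_maximalIdeal _ (fun r hr ↦ ?_) ?_
  · rcases List.mem_append.1 hr with hr | hr
    · exact mem_maximalIdeal_of_isRegular h (List.mem_append_left _ hr)
    · rwa [List.mem_singleton.1 hr]
  · rw [isWeaklyRegular_append_iff, isWeaklyRegular_singleton_iff]
    exact ⟨((isWeaklyRegular_append_iff M rs [z]).1 h.toIsWeaklyRegular).1, hreg⟩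

theorem isRegular_append_mul_self (h : IsRegular M (rs ++ [z])) :
    IsRegular M (rs ++ [z * z]) :=
  isRegular_append_singleton_of_isSMulRegular h
    (Ideal.mul_mem_left _ _ (mem_maximalIdeal_of_isRegular h (by simp)))
    ((isSMulRegular_last_of_isRegular_append h).mul (isSMulRegular_last_of_isRegular_append h))

variable [IsNoetherianRing Q]

theorem exists_isRegular_append_add (h : IsRegular M (rs ++ [z])) {J : Ideal Q} (hz : z ∈ J)
    (hl : l ∈ maximalIdeal Q) :
    ∃ n ∈ maximalIdeal Q • J, IsRegular M (rs ++ [l + n]) := by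
  have hz𝔫 := mem_maximalIdeal_of_isRegular h (r := z) (by simp)
  have hreg := isSMulRegular_last_of_isRegular_append h
  obtain ⟨n, hn, hln⟩ := exists_isSMulRegular_add
    (Submodule.smul_mem_smul hz𝔫 hz : z • z ∈ maximalIdeal Q • J) (hreg.mul hreg) l
  exact ⟨n, hn, isRegular_append_singleton_of_isSMulRegular h
    (add_mem hl (Ideal.mul_le_left hn)) hln⟩

variable {F : Type*} [AddCommGroup F] [Module Q F] {d : F →ₗ[Q] Q}

theorem exists_isRegular_append_ofFn (hd : LinearMap.range d ≤ maximalIdeal Q) {k : ℕ}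
    {a : Fin k → Q} (ha : ∀ i, a i ∈ LinearMap.range d) (h : IsRegular M (rs ++ List.ofFn a))
    (t : Fin k → F) :
    ∃ v : Fin k → F, (∀ i, v i - t i ∈ maximalIdeal Q • (⊤ : Submodule Q F)) ∧
      IsRegular M (rs ++ List.ofFn (d ∘ v)) := by
  induction k generalizing rs with
  | zero => exact ⟨t, fun i ↦ i.elim0, by simpa using h⟩
  | succ k ih =>
    rw [List.ofFn_succ, List.append_cons] at h
    have hperm (r : Q) (l : List Q) : (rs ++ l ++ [r]).Perm (rs ++ [r] ++ l) := by
      simpa only [List.append_assoc] using List.perm_append_comm.append_left rs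
    obtain ⟨n, hn, hreg⟩ := exists_isRegular_append_add
      (isRegular_of_perm h (hperm _ _).symm) (ha 0) (hd ⟨t 0, rfl⟩)
    rw [← Submodule.map_top, ← Submodule.map_smul''] at hn
    obtain ⟨u, hu, rfl⟩ := hn
    rw [← map_add] at hreg
    obtain ⟨v, hv, hvreg⟩ := ih (fun i ↦ ha i.succ) (isRegular_of_perm hreg (hperm _ _))
      (fun i ↦ t i.succ)
    refine ⟨Fin.cons (t 0 + u) v, Fin.cases (by simpa using hu) (by simpa using hv), ?_⟩
    rwa [List.ofFn_succ, List.append_cons]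

theorem exists_isRegular_ofFn (hd : LinearMap.range d ≤ maximalIdeal Q) {k : ℕ}
    {a : Fin k → Q} (ha : ∀ i, a i ∈ LinearMap.range d) (h : IsRegular M (List.ofFn a))
    (t : Fin k → F) :
    ∃ v : Fin k → F, (∀ i, v i - t i ∈ maximalIdeal Q • (⊤ : Submodule Q F)) ∧
      IsRegular M (List.ofFn (d ∘ v)) :=
  exists_isRegular_append_ofFn (rs := []) hd ha h t

end RegularSequence

/-! ### Exactness of `Hom(-, N)` below the grade -/

section HomExact

variable {Q : Type*} [CommRing Q] {P L N : Type*} [AddCommGroup P] [Module Q P]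
  [AddCommGroup L] [Module Q L] [AddCommGroup N] [Module Q N]

theorem exists_comp_eq_of_range_le [Module.Projective Q P] {f : L →ₗ[Q] N} {g : P →ₗ[Q] N}
    (h : LinearMap.range g ≤ LinearMap.range f) : ∃ k : P →ₗ[Q] L, f ∘ₗ k = g := by
  obtain ⟨k, hk⟩ := Module.projective_lifting_property f.rangeRestrict
    (g.codRestrict (LinearMap.range f) fun p ↦ h ⟨p, rfl⟩) f.surjective_rangeRestrict
  exact ⟨k, LinearMap.ext fun p ↦ congrArg Subtype.val (LinearMap.congr_fun hk p)⟩

variable {C₀ C₁ C₂ C₃ : Type*} [AddCommGroup C₀] [Module Q C₀] [AddCommGroup C₁] [Module Q C₁]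
  [AddCommGroup C₂] [Module Q C₂] [AddCommGroup C₃] [Module Q C₃]
  {e₁ : C₁ →ₗ[Q] C₀} {e₂ : C₂ →ₗ[Q] C₁} {e₃ : C₃ →ₗ[Q] C₂} {x y z : Q}

/- Exactness passes from `N ⧸ xN`, one place lower, to `N`: if `ψ` kills `e₃`, then `ψ ∘ s` is a
cocycle modulo `x`, so it is a coboundary plus `x • θ`, and `θ ∘ e₂ = ψ` after cancelling `x`. -/
theorem exact_lcomp_of_exact_lcomp_quotSMulTop [Module.Projective Q C₀] [Module.Projective Q C₁]
    (hx : IsSMulRegular N x) (he : e₁ ∘ₗ e₂ = 0) (he' : e₂ ∘ₗ e₃ = 0) {s : C₁ →ₗ[Q] C₂}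
    (hs : ∀ c, s (e₂ c) - x • c ∈ LinearMap.range e₃)
    (hexact : Function.Exact (e₁.lcomp Q (QuotSMulTop x N)) (e₂.lcomp Q (QuotSMulTop x N))) :
    Function.Exact (e₂.lcomp Q N) (e₃.lcomp Q N) := by
  refine fun ψ ↦ ⟨fun hψ ↦ ?_, ?_⟩
  · have hψs (c : C₂) : ψ (s (e₂ c)) = x • ψ c := by
      obtain ⟨b, hb⟩ := hs c
      have hψb : ψ (e₃ b) = 0 := LinearMap.congr_fun hψ b
      rwa [hb, map_sub, map_smul, sub_eq_zero] at hψb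
    obtain ⟨η, hη⟩ := (hexact (Submodule.mkQ (x • ⊤) ∘ₗ ψ ∘ₗ s)).1 <| LinearMap.ext fun c ↦
      (Submodule.Quotient.mk_eq_zero _).2 <| by
        rw [LinearMap.comp_apply, hψs]
        exact Submodule.smul_mem_pointwise_smul _ _ _ trivial
    obtain ⟨η', rfl⟩ := exists_comp_eq_of_range_le (g := η)
      (le_top.trans_eq (Submodule.range_mkQ (x • (⊤ : Submodule Q N))).symm)
    obtain ⟨θ, hθ⟩ : ∃ θ : C₁ →ₗ[Q] N, LinearMap.lsmul Q N x ∘ₗ θ = ψ ∘ₗ s - η' ∘ₗ e₁ := by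
      refine exists_comp_eq_of_range_le ?_
      rintro _ ⟨c, rfl⟩
      have hc := (Submodule.Quotient.eq _).1 (LinearMap.congr_fun hη c).symm
      obtain ⟨b, -, hb⟩ := Submodule.mem_smul_pointwise_iff_exists _ _ _ |>.1 hc
      exact ⟨b, hb⟩
    refine ⟨θ, LinearMap.ext fun c ↦ hx ?_⟩
    have hθc : x • θ (e₂ c) = ψ (s (e₂ c)) - η' (e₁ (e₂ c)) := LinearMap.congr_fun hθ (e₂ c)
    rwa [← LinearMap.comp_apply e₁, he, LinearMap.zero_apply, map_zero, sub_zero, hψs] at hθc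
  · rintro ⟨θ, rfl⟩
    exact LinearMap.ext fun c ↦ by simpa using congrArg θ (LinearMap.congr_fun he' c)

theorem lcomp_injective_of_isSMulRegular (hx : IsSMulRegular N x)
    (hxe : ∀ c, x • c ∈ LinearMap.range e₁) : Function.Injective (e₁.lcomp Q N) := by
  refine (injective_iff_map_eq_zero _).2 fun ψ hψ ↦ LinearMap.ext fun c ↦ hx ?_
  obtain ⟨b, hb⟩ := hxe c
  have hψb : ψ (e₁ b) = 0 := LinearMap.congr_fun hψ b
  simpa [hb] using hψb

theorem exists_comp_eq_lsmul [Module.Projective Q C₀] (hxe : ∀ c, x • c ∈ LinearMap.range e₁) :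
    ∃ s : C₀ →ₗ[Q] C₁, e₁ ∘ₗ s = LinearMap.lsmul Q C₀ x :=
  exists_comp_eq_of_range_le (by rintro _ ⟨c, rfl⟩; exact hxe c)

variable [Module.Projective Q C₀]

theorem exact_lcomp_of_isWeaklyRegular_pair (hexact : Function.Exact e₂ e₁)
    (hr : IsWeaklyRegular N [x, y])
    (hann : ∀ r ∈ [x, y], ∀ c, r • c ∈ LinearMap.range e₁) :
    Function.Exact (e₁.lcomp Q N) (e₂.lcomp Q N) := by
  rw [isWeaklyRegular_cons_iff, isWeaklyRegular_singleton_iff] at hr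
  obtain ⟨s, hs⟩ := exists_comp_eq_lsmul (hann x (by simp))
  have hs' (c : C₀) : e₁ (s c) = x • c := LinearMap.congr_fun hs c
  refine exact_lcomp_of_exact_lcomp_quotSMulTop (e₁ := (0 : C₀ →ₗ[Q] C₀)) hr.1
    (LinearMap.zero_comp _) hexact.linearMap_comp_eq_zero (s := s) (fun c ↦ ?_) (fun θ ↦ ?_)
  · simp [← hexact.linearMap_ker_eq, hs']
  · have hinj := lcomp_injective_of_isSMulRegular hr.2 (hann y (by simp))
    rw [map_eq_zero_iff _ hinj]
    simp [LinearMap.lcomp_apply', eq_comm]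

theorem exact_lcomp_of_isWeaklyRegular_triple [Module.Projective Q C₁]
    (hexact : Function.Exact e₂ e₁) (hexact' : Function.Exact e₃ e₂)
    (hr : IsWeaklyRegular N [x, y, z])
    (hann : ∀ r ∈ [x, y, z], ∀ c, r • c ∈ LinearMap.range e₁) :
    Function.Exact (e₂.lcomp Q N) (e₃.lcomp Q N) := by
  rw [isWeaklyRegular_cons_iff] at hr
  obtain ⟨s, hs⟩ := exists_comp_eq_lsmul (hann x (by simp))
  have hs' (c : C₀) : e₁ (s c) = x • c := LinearMap.congr_fun hs c
  obtain ⟨s₁, hs₁⟩ : ∃ s₁ : C₁ →ₗ[Q] C₂, e₂ ∘ₗ s₁ = LinearMap.lsmul Q C₁ x - s ∘ₗ e₁ := by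
    refine exists_comp_eq_of_range_le ?_
    rintro _ ⟨c, rfl⟩
    simp [← hexact.linearMap_ker_eq, hs']
  have hs₁' (c : C₁) : e₂ (s₁ c) = x • c - s (e₁ c) := LinearMap.congr_fun hs₁ c
  refine exact_lcomp_of_exact_lcomp_quotSMulTop hr.1 hexact.linearMap_comp_eq_zero
    hexact'.linearMap_comp_eq_zero (s := s₁) (fun c ↦ ?_)
    (exact_lcomp_of_isWeaklyRegular_pair hexact hr.2 fun r hr ↦ hann r (.tail _ hr))
  simp [← hexact'.linearMap_ker_eq, hs₁', hexact.apply_apply_eq_zero]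

end HomExact

/-! ### The Koszul complex on three elements -/

section Koszul

variable {Q : Type*} [CommRing Q] {a : Fin 3 → Q}

theorem mem_ofList_take_of_isWeaklyRegular {rs : List Q} (h : IsWeaklyRegular Q rs)
    (i : Fin rs.length) {c : Q} (hc : rs.get i * c ∈ Ideal.ofList (rs.take i)) :
    c ∈ Ideal.ofList (rs.take i) := by
  have hi := (isSMulRegular_quotient_iff_mem_of_smul_mem _ _).1
    ((isWeaklyRegular_iff_Fin Q rs).1 h i) c
  simp only [smul_eq_mul, Ideal.mul_top] at hi
  exact hi hc

theorem isWeaklyRegular_triple_apply {x y z : Q} (h : IsWeaklyRegular Q [x, y, z]) :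
    (∀ c, x * c = 0 → c = 0) ∧ (∀ c, y * c ∈ Ideal.span {x} → c ∈ Ideal.span {x}) ∧
      ∀ c, z * c ∈ Ideal.span {x, y} → c ∈ Ideal.span {x, y} := by
  have hpair : Ideal.ofList [x, y] = Ideal.span {x, y} := by simp [Ideal.span_insert]
  refine ⟨fun c hc ↦ ?_, fun c hc ↦ ?_, fun c hc ↦ ?_⟩
  · simpa using mem_ofList_take_of_isWeaklyRegular h ⟨0, by simp⟩ (c := c) (by simpa using hc)
  · simpa using mem_ofList_take_of_isWeaklyRegular h ⟨1, by simp⟩ (c := c) (by simpa using hc)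
  · have := mem_ofList_take_of_isWeaklyRegular h ⟨2, by simp⟩ (c := c)
    rw [← hpair] at hc ⊢
    exact this hc

theorem linearCombination_fin_three {M : Type*} [AddCommGroup M] [Module Q M] (v : Fin 3 → M)
    (x : Fin 3 → Q) :
    Fintype.linearCombination Q v x = x 0 • v 0 + x 1 • v 1 + x 2 • v 2 := by
  simp [Fintype.linearCombination_apply, Fin.sum_univ_three]

theorem exact_toSpanSingleton_crossProduct (h : IsWeaklyRegular Q (List.ofFn a)) :
    Function.Exact (LinearMap.toSpanSingleton Q _ a) (crossProduct a) := by
  obtain ⟨h0, h1, -⟩ := isWeaklyRegular_triple_apply (x := a 0) (y := a 1) (z := a 2) h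
  refine fun x ↦ ⟨fun hx ↦ ?_, by rintro ⟨c, rfl⟩; simp⟩
  rw [cross_apply] at hx
  have e1 : a 2 * x 0 - a 0 * x 2 = 0 := congrFun hx 1
  have e2 : a 0 * x 1 - a 1 * x 0 = 0 := congrFun hx 2
  obtain ⟨c, hc⟩ := Ideal.mem_span_singleton'.1
    (h1 (x 0) (Ideal.mem_span_singleton'.2 ⟨x 1, by linear_combination e2⟩))
  have hc1 := h0 (c * a 1 - x 1) (by linear_combination -e2 + a 1 * hc)
  have hc2 := h0 (c * a 2 - x 2) (by linear_combination e1 + a 2 * hc)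
  refine ⟨c, funext fun i ↦ ?_⟩
  fin_cases i
  · exact hc
  · exact sub_eq_zero.1 hc1
  · exact sub_eq_zero.1 hc2

theorem exact_crossProduct_linearCombination (h : IsWeaklyRegular Q (List.ofFn a)) :
    Function.Exact (crossProduct a) (Fintype.linearCombination Q a) := by
  obtain ⟨h0, h1, h2⟩ := isWeaklyRegular_triple_apply (x := a 0) (y := a 1) (z := a 2) h
  refine fun x ↦ ⟨fun hx ↦ ?_, ?_⟩
  · simp only [linearCombination_fin_three, smul_eq_mul] at hx
    obtain ⟨p, q, hpq⟩ := Ideal.mem_span_pair.1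
      (h2 (x 2) (Ideal.mem_span_pair.2 ⟨-x 0, -x 1, by linear_combination -hx⟩))
    obtain ⟨r, hr⟩ := Ideal.mem_span_singleton'.1
      (h1 (x 1 + q * a 2) (Ideal.mem_span_singleton'.2 ⟨-(x 0 + p * a 2),
        by linear_combination -hx - a 2 * hpq⟩))
    have hp := h0 (x 0 + p * a 2 + r * a 1) (by linear_combination hx + a 2 * hpq + a 1 * hr)
    refine ⟨![-q, p, -r], funext fun i ↦ ?_⟩
    fin_cases i <;> simp only [cross_apply, Fin.zero_eta, Fin.mk_one, Fin.reduceFinMk,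
      Matrix.cons_val]
    · linear_combination -hp
    · linear_combination hr
    · linear_combination hpq
  · rintro ⟨y, rfl⟩
    simp only [linearCombination_fin_three, cross_apply, Matrix.cons_val, smul_eq_mul]
    ring

end Koszul

/-! ### Free resolutions of linked ideals -/

section Resolution

variable {Q F₁ F₂ F₃ : Type*} [CommRing Q] [AddCommGroup F₁] [Module Q F₁]
  [AddCommGroup F₂] [Module Q F₂] [AddCommGroup F₃] [Module Q F₃]

/-- The complex `0 → F₃ → F₂ → F₁ → Q` resolves `Q ⧸ I`. No freeness or minimality is included. -/
structure IsResolution (I : Ideal Q) (d₁ : F₁ →ₗ[Q] Q) (d₂ : F₂ →ₗ[Q] F₁)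
    (d₃ : F₃ →ₗ[Q] F₂) : Prop where
  range_eq : LinearMap.range d₁ = I
  exact₁ : Function.Exact d₂ d₁
  exact₂ : Function.Exact d₃ d₂
  injective : Function.Injective d₃

/-- `v`, `α₂` and `w` are the components in degrees `1`, `2`, `3` of a map, over the identity of
`Q`, from the Koszul complex on `a = d₁ ∘ v` to the complex `(d₁, d₂, d₃)`. The Koszul complex is
written as `Q → Q³ → Q³ → Q` with differentials `a`, `a ⨯₃ -` and the dot product with `a`. -/
structure IsKoszulLift (d₁ : F₁ →ₗ[Q] Q) (d₂ : F₂ →ₗ[Q] F₁) (d₃ : F₃ →ₗ[Q] F₂)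
    (v : Fin 3 → F₁) (α₂ : (Fin 3 → Q) →ₗ[Q] F₂) (w : F₃) : Prop where
  comm₂ : ∀ y, d₂ (α₂ y) = Fintype.linearCombination Q v ((d₁ ∘ v) ⨯₃ y)
  comm₃ : d₃ w = α₂ (d₁ ∘ v)

/-- The middle differential of the mapping cone of a Koszul lift. -/
def linkMap (d₃ : F₃ →ₗ[Q] F₂) (α₂ : (Fin 3 → Q) →ₗ[Q] F₂) (a : Fin 3 → Q) :
    (F₃ × (Fin 3 → Q)) →ₗ[Q] F₂ × (Fin 3 → Q) :=
  (d₃.coprod α₂).prod (-(crossProduct a ∘ₗ LinearMap.snd Q _ _))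

@[simp]
theorem linkMap_apply (d₃ : F₃ →ₗ[Q] F₂) (α₂ : (Fin 3 → Q) →ₗ[Q] F₂) (a : Fin 3 → Q)
    (p : F₃ × (Fin 3 → Q)) : linkMap d₃ α₂ a p = (d₃ p.1 + α₂ p.2, -(a ⨯₃ p.2)) := rfl

theorem map_linearCombination (d₁ : F₁ →ₗ[Q] F₂) {ι : Type*} [Fintype ι] (v : ι → F₁) (x : ι → Q) :
    d₁ (Fintype.linearCombination Q v x) = Fintype.linearCombination Q (d₁ ∘ v) x := by
  simp [Fintype.linearCombination_apply]

theorem apply_self_mem_span_range {ι : Type*} [Finite ι] (a : ι → Q) (f : (ι → Q) →ₗ[Q] Q) :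
    f a ∈ Ideal.span (Set.range a) := by
  classical
  have := Fintype.ofFinite ι
  rw [LinearMap.pi_apply_eq_sum_univ f a]
  exact Ideal.sum_mem _ fun i _ ↦ Ideal.mul_mem_right _ _ (Ideal.subset_span ⟨i, rfl⟩)

variable {I : Ideal Q} {d₁ : F₁ →ₗ[Q] Q} {d₂ : F₂ →ₗ[Q] F₁} {d₃ : F₃ →ₗ[Q] F₂}
  {v : Fin 3 → F₁} {α₂ : (Fin 3 → Q) →ₗ[Q] F₂} {w : F₃}

/- Multiplication by `c ∈ I` is null-homotopic; `h` is the top component of a homotopy. -/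
theorem IsResolution.exists_apply_eq_smul [Module.Projective Q F₁] [Module.Projective Q F₂]
    (hres : IsResolution I d₁ d₂ d₃) {c : Q} (hc : c ∈ I) :
    ∃ h : F₂ →ₗ[Q] F₃, ∀ g, h (d₃ g) = c • g := by
  obtain ⟨u, rfl⟩ := hres.range_eq ▸ hc
  obtain ⟨h₁, hh₁⟩ : ∃ h₁, d₂ ∘ₗ h₁ = LinearMap.lsmul Q F₁ (d₁ u) - d₁.smulRight u := by
    refine exists_comp_eq_of_range_le ?_
    rintro _ ⟨p, rfl⟩
    simp [← hres.exact₁.linearMap_ker_eq, mul_comm]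
  obtain ⟨h₂, hh₂⟩ : ∃ h₂, d₃ ∘ₗ h₂ = LinearMap.lsmul Q F₂ (d₁ u) - h₁ ∘ₗ d₂ := by
    refine exists_comp_eq_of_range_le ?_
    rintro _ ⟨p, rfl⟩
    simp [← hres.exact₂.linearMap_ker_eq, ← LinearMap.comp_apply d₂ h₁, hh₁,
      hres.exact₁.apply_apply_eq_zero]
  refine ⟨h₂, fun g ↦ hres.injective ?_⟩
  rw [← LinearMap.comp_apply, hh₂]
  simp [hres.exact₂.apply_apply_eq_zero]

theorem IsResolution.eval_mem_colon [Module.Projective Q F₁] [Module.Projective Q F₂]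
    (hres : IsResolution I d₁ d₂ d₃) (hlift : IsKoszulLift d₁ d₂ d₃ v α₂ w)
    (ψ : Module.Dual Q (F₃ × (Fin 3 → Q))) :
    ψ (w, -(d₁ ∘ v)) ∈ (Ideal.span (Set.range (d₁ ∘ v))).colon (I : Set Q) := by
  refine Submodule.mem_colon.2 fun c hc ↦ ?_
  obtain ⟨h, hh⟩ := hres.exists_apply_eq_smul hc
  have hψ : ψ (w, -(d₁ ∘ v)) • c =
      (ψ ∘ₗ (h ∘ₗ α₂).prod (-(LinearMap.lsmul Q _ c))) (d₁ ∘ v) := by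
    change ψ (w, -(d₁ ∘ v)) * c = ψ (h (α₂ (d₁ ∘ v)), -(c • (d₁ ∘ v)))
    rw [← hlift.comm₃, hh, ← smul_neg, ← Prod.smul_mk, map_smul, smul_eq_mul, mul_comm]
  rw [hψ]
  exact apply_self_mem_span_range _ _

theorem IsResolution.exists_comparison_of_mem_colon [Module.Projective Q F₁]
    [Module.Projective Q F₂] [Module.Projective Q F₃] (hres : IsResolution I d₁ d₂ d₃)
    {a : Fin 3 → Q} (hreg : IsWeaklyRegular Q (List.ofFn a)) {z : Q}
    (hz : z ∈ (Ideal.span (Set.range a)).colon (I : Set Q)) :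
    ∃ (t₁ : F₁ →ₗ[Q] Fin 3 → Q) (t₂ : F₂ →ₗ[Q] Fin 3 → Q) (t₃ : F₃ →ₗ[Q] Q),
      (∀ p, Fintype.linearCombination Q a (t₁ p) = z * d₁ p) ∧
      (∀ p, a ⨯₃ t₂ p = t₁ (d₂ p)) ∧ ∀ p, t₃ p • a = t₂ (d₃ p) := by
  obtain ⟨t₁, ht₁⟩ : ∃ t₁, Fintype.linearCombination Q a ∘ₗ t₁ = z • d₁ := by
    refine exists_comp_eq_of_range_le ?_
    rintro _ ⟨p, rfl⟩
    rw [Fintype.range_linearCombination]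
    exact Submodule.mem_colon.1 hz _ (hres.range_eq ▸ ⟨p, rfl⟩)
  obtain ⟨t₂, ht₂⟩ : ∃ t₂, crossProduct a ∘ₗ t₂ = t₁ ∘ₗ d₂ := by
    refine exists_comp_eq_of_range_le ?_
    rw [← (exact_crossProduct_linearCombination hreg).linearMap_ker_eq]
    rintro _ ⟨p, rfl⟩
    rw [LinearMap.mem_ker, ← LinearMap.comp_apply, ← LinearMap.comp_assoc, ht₁]
    simp [hres.exact₁.apply_apply_eq_zero]
  obtain ⟨t₃, ht₃⟩ : ∃ t₃, LinearMap.toSpanSingleton Q _ a ∘ₗ t₃ = t₂ ∘ₗ d₃ := by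
    refine exists_comp_eq_of_range_le ?_
    rw [← (exact_toSpanSingleton_crossProduct hreg).linearMap_ker_eq]
    rintro _ ⟨p, rfl⟩
    rw [LinearMap.mem_ker, ← LinearMap.comp_apply, ← LinearMap.comp_assoc, ht₂]
    simp [hres.exact₂.apply_apply_eq_zero]
  exact ⟨t₁, t₂, t₃, LinearMap.congr_fun ht₁, LinearMap.congr_fun ht₂, LinearMap.congr_fun ht₃⟩

/- Composing the lift with the comparison map `t` is homotopic to multiplication by `z` on the
Koszul complex; `H₂` is the top component of a homotopy. -/
theorem IsKoszulLift.exists_homotopy (hlift : IsKoszulLift d₁ d₂ d₃ v α₂ w)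
    (hreg : IsWeaklyRegular Q (List.ofFn (d₁ ∘ v))) {z : Q} {t₁ : F₁ →ₗ[Q] Fin 3 → Q}
    {t₂ : F₂ →ₗ[Q] Fin 3 → Q}
    (ht₁ : ∀ p, Fintype.linearCombination Q (d₁ ∘ v) (t₁ p) = z * d₁ p)
    (ht₂ : ∀ p, (d₁ ∘ v) ⨯₃ t₂ p = t₁ (d₂ p)) :
    ∃ H₂ : (Fin 3 → Q) →ₗ[Q] Q,
      H₂ (d₁ ∘ v) • (d₁ ∘ v) = t₂ (α₂ (d₁ ∘ v)) - z • (d₁ ∘ v) := by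
  set a := d₁ ∘ v
  have hd₁ (x) : d₁ (Fintype.linearCombination Q v x) = Fintype.linearCombination Q a x :=
    map_linearCombination d₁ v x
  have hα₂ (y) : d₂ (α₂ y) = Fintype.linearCombination Q v (a ⨯₃ y) := hlift.comm₂ y
  obtain ⟨H₁, hH₁⟩ : ∃ H₁, crossProduct a ∘ₗ H₁ =
      t₁ ∘ₗ Fintype.linearCombination Q v - LinearMap.lsmul Q _ z := by
    refine exists_comp_eq_of_range_le ?_
    rw [← (exact_crossProduct_linearCombination hreg).linearMap_ker_eq]
    rintro _ ⟨p, rfl⟩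
    simp [ht₁, hd₁]
  have hH₁' (p) : a ⨯₃ H₁ p = t₁ (Fintype.linearCombination Q v p) - z • p :=
    LinearMap.congr_fun hH₁ p
  obtain ⟨H₂, hH₂⟩ : ∃ H₂, LinearMap.toSpanSingleton Q _ a ∘ₗ H₂ =
      t₂ ∘ₗ α₂ - LinearMap.lsmul Q _ z - H₁ ∘ₗ crossProduct a := by
    refine exists_comp_eq_of_range_le ?_
    rw [← (exact_toSpanSingleton_crossProduct hreg).linearMap_ker_eq]
    rintro _ ⟨p, rfl⟩
    simp [ht₂, hα₂, hH₁']
  exact ⟨H₂, by simpa using LinearMap.congr_fun hH₂ a⟩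

theorem IsResolution.range_eval_eq_colon [Module.Projective Q F₁] [Module.Projective Q F₂]
    [Module.Projective Q F₃] (hres : IsResolution I d₁ d₂ d₃)
    (hlift : IsKoszulLift d₁ d₂ d₃ v α₂ w) (hreg : IsWeaklyRegular Q (List.ofFn (d₁ ∘ v))) :
    LinearMap.range (Module.Dual.eval Q (F₃ × (Fin 3 → Q)) (w, -(d₁ ∘ v))) =
      (Ideal.span (Set.range (d₁ ∘ v))).colon (I : Set Q) := by
  refine le_antisymm ?_ fun z hz ↦ ?_
  · rintro _ ⟨ψ, rfl⟩
    exact hres.eval_mem_colon hlift ψ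
  · obtain ⟨t₁, t₂, t₃, ht₁, ht₂, ht₃⟩ := hres.exists_comparison_of_mem_colon hreg hz
    obtain ⟨H₂, hH₂⟩ := hlift.exists_homotopy hreg ht₁ ht₂
    rw [← hlift.comm₃, ← ht₃] at hH₂
    have hH₂0 : H₂ (d₁ ∘ v) * d₁ (v 0) = t₃ w * d₁ (v 0) - z * d₁ (v 0) := congrFun hH₂ 0
    refine ⟨t₃.coprod H₂, ?_⟩
    have := (isWeaklyRegular_triple_apply hreg).1 (t₃ w - H₂ (d₁ ∘ v) - z) <| by
      change d₁ (v 0) * _ = 0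
      linear_combination -hH₂0
    simp only [Module.Dual.eval_apply, LinearMap.coprod_apply, map_neg]
    linear_combination this

theorem IsResolution.smul_mem_range_coprod (hres : IsResolution I d₁ d₂ d₃) (i : Fin 3) (c : F₁) :
    d₁ (v i) • c ∈ LinearMap.range (d₂.coprod (Fintype.linearCombination Q v)) := by
  obtain ⟨b, hb⟩ := (hres.exact₁ (d₁ (v i) • c - d₁ c • v i)).1 (by simp [mul_comm])
  exact ⟨(b, Pi.single i (d₁ c)), by simp [hb]⟩

theorem IsResolution.exact_linkMap_coprod (hres : IsResolution I d₁ d₂ d₃)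
    (hlift : IsKoszulLift d₁ d₂ d₃ v α₂ w) (hreg : IsWeaklyRegular Q (List.ofFn (d₁ ∘ v))) :
    Function.Exact (linkMap d₃ α₂ (d₁ ∘ v)) (d₂.coprod (Fintype.linearCombination Q v)) := by
  rintro ⟨f, x⟩
  refine ⟨fun hfx ↦ ?_, ?_⟩
  · rw [LinearMap.coprod_apply] at hfx
    have hx : Fintype.linearCombination Q (d₁ ∘ v) x = 0 := by
      simpa [hres.exact₁.apply_apply_eq_zero, map_linearCombination] using congrArg d₁ hfx
    obtain ⟨y, rfl⟩ := (exact_crossProduct_linearCombination hreg x).1 hx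
    rw [← hlift.comm₂, ← map_add] at hfx
    obtain ⟨g, hg⟩ := (hres.exact₂ _).1 hfx
    exact ⟨(g, -y), by simp [hg]⟩
  · rintro ⟨⟨g, y⟩, hgy⟩
    simp [← hgy, hres.exact₂.apply_apply_eq_zero, hlift.comm₂, -cross_anticomm]

theorem IsResolution.exact_toSpanSingleton_linkMap (hres : IsResolution I d₁ d₂ d₃)
    (hlift : IsKoszulLift d₁ d₂ d₃ v α₂ w) (hreg : IsWeaklyRegular Q (List.ofFn (d₁ ∘ v))) :
    Function.Exact (LinearMap.toSpanSingleton Q (F₃ × (Fin 3 → Q)) (w, -(d₁ ∘ v)))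
      (linkMap d₃ α₂ (d₁ ∘ v)) := by
  rintro ⟨g, y⟩
  refine ⟨fun hgy ↦ ?_, ?_⟩
  · rw [linkMap_apply, Prod.mk_eq_zero, neg_eq_zero] at hgy
    obtain ⟨c, rfl⟩ := (exact_toSpanSingleton_crossProduct hreg y).1 hgy.2
    have hg : g = -c • w := hres.injective <| by
      rw [map_smul, hlift.comm₃, eq_neg_of_add_eq_zero_left hgy.1]
      simp
    exact ⟨-c, by simp [hg]⟩
  · rintro ⟨c, hc⟩
    simp [← hc, hlift.comm₃]

/- This is Ferrand's mapping cone construction: the dual of the mapping cone of the Koszul lift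
resolves the link. -/
theorem IsResolution.link [Module.Projective Q F₁] [Module.Projective Q F₂]
    [Module.Projective Q F₃] (hres : IsResolution I d₁ d₂ d₃)
    (hlift : IsKoszulLift d₁ d₂ d₃ v α₂ w) (hreg : IsWeaklyRegular Q (List.ofFn (d₁ ∘ v))) :
    IsResolution ((Ideal.span (Set.range (d₁ ∘ v))).colon (I : Set Q))
      (Module.Dual.eval Q (F₃ × (Fin 3 → Q)) (w, -(d₁ ∘ v)))
      (linkMap d₃ α₂ (d₁ ∘ v)).dualMap (d₂.coprod (Fintype.linearCombination Q v)).dualMap := by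
  have hexact := hres.exact_linkMap_coprod hlift hreg
  have hexact' := hres.exact_toSpanSingleton_linkMap hlift hreg
  have hann : ∀ r ∈ [d₁ (v 0), d₁ (v 1), d₁ (v 2)], ∀ c,
      r • c ∈ LinearMap.range (d₂.coprod (Fintype.linearCombination Q v)) := by
    simp only [List.forall_mem_cons]
    exact ⟨hres.smul_mem_range_coprod 0, hres.smul_mem_range_coprod 1,
      hres.smul_mem_range_coprod 2, by simp⟩
  have hreg₂ : IsWeaklyRegular Q [d₁ (v 0), d₁ (v 1)] :=
    ((isWeaklyRegular_append_iff Q [d₁ (v 0), d₁ (v 1)] [d₁ (v 2)]).1 hreg).1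
  have hreg₁ : IsSMulRegular Q (d₁ (v 0)) := ((isWeaklyRegular_cons_iff Q _ _).1 hreg).1
  refine ⟨hres.range_eval_eq_colon hlift hreg, fun ψ ↦ ?_, ?_, ?_⟩
  · refine Iff.trans ?_ (exact_lcomp_of_isWeaklyRegular_triple hexact hexact' hreg hann ψ)
    simp [LinearMap.ext_ring_iff]
  · exact exact_lcomp_of_isWeaklyRegular_pair hexact hreg₂ fun r hr ↦ hann r (by aesop)
  · exact lcomp_injective_of_isSMulRegular hreg₁ (hann _ (by simp))

end Resolution

/-! ### Maps modulo the maximal ideal -/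

section Minimal

variable {Q M N P : Type*} [CommRing Q] [IsLocalRing Q] [AddCommGroup M] [Module Q M]
  [AddCommGroup N] [Module Q N] [AddCommGroup P] [Module Q P]

theorem map_mem_maximalIdeal_smul_top (f : M →ₗ[Q] N) {x : M}
    (hx : x ∈ maximalIdeal Q • (⊤ : Submodule Q M)) :
    f x ∈ maximalIdeal Q • (⊤ : Submodule Q N) :=
  Submodule.smul_top_le_comap_smul_top _ f hx

theorem prodMk_mem_maximalIdeal_smul_top {x : M} {y : N}
    (hx : x ∈ maximalIdeal Q • (⊤ : Submodule Q M))
    (hy : y ∈ maximalIdeal Q • (⊤ : Submodule Q N)) :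
    (x, y) ∈ maximalIdeal Q • (⊤ : Submodule Q (M × N)) := by
  simpa using add_mem (map_mem_maximalIdeal_smul_top (.inl Q M N) hx)
    (map_mem_maximalIdeal_smul_top (.inr Q M N) hy)

theorem mem_maximalIdeal_smul_top_iff_forall_dual [Module.Free Q M] {x : M} :
    x ∈ maximalIdeal Q • (⊤ : Submodule Q M) ↔ ∀ φ : Module.Dual Q M, φ x ∈ maximalIdeal Q := by
  refine ⟨fun h φ ↦ by simpa using map_mem_maximalIdeal_smul_top φ h, fun h ↦ ?_⟩
  let b := Module.Free.chooseBasis Q M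
  rw [← b.linearCombination_repr x, Finsupp.linearCombination_apply]
  exact Submodule.sum_mem _ fun i _ ↦ Submodule.smul_mem_smul (h (b.coord i)) trivial

theorem mem_maximalIdeal_smul_top_pi_iff {ι : Type*} [Finite ι] {x : ι → Q} :
    x ∈ maximalIdeal Q • (⊤ : Submodule Q (ι → Q)) ↔ ∀ i, x i ∈ maximalIdeal Q := by
  classical
  have := Fintype.ofFinite ι
  refine ⟨fun h i ↦ by simpa using map_mem_maximalIdeal_smul_top (LinearMap.proj i) h, fun h ↦ ?_⟩
  rw [pi_eq_sum_univ x]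
  exact Submodule.sum_mem _ fun i _ ↦ Submodule.smul_mem_smul (h i) trivial

theorem mem_maximalIdeal_smul_top_dual_iff [Module.Free Q M] [Module.Finite Q M]
    {ψ : Module.Dual Q M} :
    ψ ∈ maximalIdeal Q • (⊤ : Submodule Q (Module.Dual Q M)) ↔ ∀ x, ψ x ∈ maximalIdeal Q := by
  refine ⟨fun h x ↦ by simpa using map_mem_maximalIdeal_smul_top (Module.Dual.eval Q M x) h,
    fun h ↦ ?_⟩
  rw [← (Module.Free.chooseBasis Q M).sum_dual_apply_smul_coord ψ]
  exact Submodule.sum_mem _ fun i _ ↦ Submodule.smul_mem_smul (h _) trivial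

/-- `d` vanishes modulo the maximal ideal, as the differentials of a minimal complex do.
Consequently `IsMinimalMap (d - d')` says that `d` and `d'` agree modulo the maximal ideal. -/
def IsMinimalMap (d : M →ₗ[Q] N) : Prop :=
  ∀ x, d x ∈ maximalIdeal Q • (⊤ : Submodule Q N)

namespace IsMinimalMap

variable {d d' : M →ₗ[Q] N}

theorem add (h : IsMinimalMap d) (h' : IsMinimalMap d') : IsMinimalMap (d + d') :=
  fun x ↦ add_mem (h x) (h' x)

theorem sub (h : IsMinimalMap d) (h' : IsMinimalMap d') : IsMinimalMap (d - d') :=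
  fun x ↦ sub_mem (h x) (h' x)

theorem neg (h : IsMinimalMap d) : IsMinimalMap (-d) := fun x ↦ neg_mem (h x)

theorem comp_left (f : N →ₗ[Q] P) (h : IsMinimalMap d) : IsMinimalMap (f ∘ₗ d) :=
  fun x ↦ map_mem_maximalIdeal_smul_top f (h x)

theorem comp_right (h : IsMinimalMap d) (g : P →ₗ[Q] M) : IsMinimalMap (d ∘ₗ g) := fun x ↦ h (g x)

theorem of_comp_surjective {g : P →ₗ[Q] M} (hg : Function.Surjective g)
    (h : IsMinimalMap (d ∘ₗ g)) : IsMinimalMap d := fun x ↦ by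
  obtain ⟨y, rfl⟩ := hg x
  exact h y

theorem dualMap [Module.Free Q M] [Module.Finite Q M] (h : IsMinimalMap d) :
    IsMinimalMap d.dualMap := fun ψ ↦
  mem_maximalIdeal_smul_top_dual_iff.2 fun x ↦ by
    simpa using map_mem_maximalIdeal_smul_top ψ (h x)

theorem linearCombination {ι : Type*} [Fintype ι] {v : ι → M}
    (hv : ∀ i, v i ∈ maximalIdeal Q • (⊤ : Submodule Q M)) :
    IsMinimalMap (Fintype.linearCombination Q v) := fun c ↦ by
  rw [Fintype.linearCombination_apply]
  exact Submodule.sum_mem _ fun i _ ↦ Submodule.smul_mem _ _ (hv i)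

theorem crossProduct {a : Fin 3 → Q} (ha : ∀ i, a i ∈ maximalIdeal Q) :
    IsMinimalMap (crossProduct a) := fun y ↦ by
  rw [mem_maximalIdeal_smul_top_pi_iff, cross_apply]
  intro i
  fin_cases i <;> exact sub_mem (Ideal.mul_mem_right _ _ (ha _)) (Ideal.mul_mem_right _ _ (ha _))

theorem bijective_of_sub_id [Module.Finite Q M] {f : M →ₗ[Q] M}
    (h : IsMinimalMap (f - LinearMap.id)) : Function.Bijective f := by
  refine OrzechProperty.bijective_of_surjective_endomorphism f ?_
  rw [← LinearMap.range_eq_top, eq_top_iff]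
  refine Submodule.le_of_le_smul_of_le_jacobson_bot (I := maximalIdeal Q) Module.Finite.fg_top
    (maximalIdeal_le_jacobson _) fun x _ ↦ ?_
  have hx : f x ∈ LinearMap.range f := ⟨x, rfl⟩
  simpa using sub_mem (Submodule.mem_sup_left hx) (Submodule.mem_sup_right (h x))

end IsMinimalMap

end Minimal

section ResidueRank

variable {Q M N M' N' : Type*} [CommRing Q] [IsLocalRing Q] [AddCommGroup M] [Module Q M]
  [AddCommGroup N] [Module Q N] [AddCommGroup M'] [Module Q M'] [AddCommGroup N'] [Module Q N']

/-- The map `d` has rank `p` modulo the maximal ideal. This is encoded by a `p × p` identity block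
of `d`, cut out by `r` and `Λ`, such that the rest of `d` vanishes modulo the maximal ideal. -/
def HasResidueRank (d : M →ₗ[Q] N) (p : ℕ) : Prop :=
  ∃ (Λ : N →ₗ[Q] Fin p → Q) (r : (Fin p → Q) →ₗ[Q] M),
    Λ ∘ₗ d ∘ₗ r = LinearMap.id ∧ IsMinimalMap (d - d ∘ₗ r ∘ₗ Λ ∘ₗ d)

theorem IsMinimalMap.hasResidueRank_zero {d : M →ₗ[Q] N} (h : IsMinimalMap d) :
    HasResidueRank d 0 :=
  ⟨0, 0, Subsingleton.elim _ _, by simpa using h⟩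

theorem hasResidueRank_of_leftInverse {p : ℕ} {T : (Fin p → Q) →ₗ[Q] N}
    {Λ : N →ₗ[Q] Fin p → Q} (h : Λ ∘ₗ T = LinearMap.id) : HasResidueRank T p :=
  ⟨Λ, LinearMap.id, h, fun x ↦ by simp [h]⟩

theorem hasResidueRank_linearCombination_single {ι : Type*} [DecidableEq ι] {p : ℕ} {e : Fin p → ι}
    (he : Function.Injective e) :
    HasResidueRank (Fintype.linearCombination Q fun i ↦ (Pi.single (e i) 1 : ι → Q)) p := by
  refine hasResidueRank_of_leftInverse (Λ := LinearMap.funLeft Q Q e) ?_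
  ext i j
  simp [Pi.single_apply, LinearMap.funLeft_apply, he.eq_iff]

namespace HasResidueRank

variable {d d' : M →ₗ[Q] N} {p : ℕ}

theorem congr (h : HasResidueRank d p) (hd : IsMinimalMap (d' - d)) : HasResidueRank d' p := by
  obtain ⟨Λ, r, hid, hmin⟩ := h
  have hB : IsMinimalMap (Λ ∘ₗ d' ∘ₗ r - LinearMap.id) := by
    rw [← hid, ← LinearMap.comp_sub, ← LinearMap.sub_comp]
    exact (hd.comp_right r).comp_left Λ
  let B := LinearEquiv.ofBijective _ hB.bijective_of_sub_id
  have hBsymm (c) : B.symm (Λ (d' (r c))) = c := B.symm_apply_apply c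
  have hmin' : IsMinimalMap (d' - d' ∘ₗ r ∘ₗ Λ ∘ₗ d) := by
    rw [show d' - d' ∘ₗ r ∘ₗ Λ ∘ₗ d =
      (d' - d) + (d - d ∘ₗ r ∘ₗ Λ ∘ₗ d) - (d' - d) ∘ₗ r ∘ₗ Λ ∘ₗ d by
        rw [LinearMap.sub_comp]; abel]
    exact (hd.add hmin).sub (hd.comp_right _)
  refine ⟨B.symm.toLinearMap ∘ₗ Λ, r, LinearMap.ext hBsymm, ?_⟩
  convert hmin'.comp_left (LinearMap.id - d' ∘ₗ r ∘ₗ B.symm.toLinearMap ∘ₗ Λ) using 1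
  ext x
  simp [hBsymm]

theorem comp {i : N →ₗ[Q] N'} {j : N' →ₗ[Q] N} (hji : j ∘ₗ i = LinearMap.id) {q : M' →ₗ[Q] M}
    {s : M →ₗ[Q] M'} (hqs : q ∘ₗ s = LinearMap.id) (h : HasResidueRank d p) :
    HasResidueRank (i ∘ₗ d ∘ₗ q) p := by
  obtain ⟨Λ, r, hid, hmin⟩ := h
  have hji' (x) : j (i x) = x := LinearMap.congr_fun hji x
  have hqs' (x) : q (s x) = x := LinearMap.congr_fun hqs x
  refine ⟨Λ ∘ₗ j, s ∘ₗ r, ?_, ?_⟩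
  · refine Eq.trans (LinearMap.ext fun c ↦ ?_) hid
    simp [hji', hqs']
  · convert (hmin.comp_left i).comp_right q using 1
    ext x
    simp [hji', hqs']

theorem of_comp_surjective {q : M' →ₗ[Q] M} (hq : Function.Surjective q)
    (h : HasResidueRank (d ∘ₗ q) p) : HasResidueRank d p := by
  obtain ⟨Λ, r, hid, hmin⟩ := h
  exact ⟨Λ, q ∘ₗ r, hid, .of_comp_surjective hq hmin⟩

/- Transposing the identity block of `d` gives one of `d.dualMap`. -/
theorem dualMap [Module.Free Q M] [Module.Finite Q M] (h : HasResidueRank d p) :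
    HasResidueRank d.dualMap p := by
  obtain ⟨Λ, r, hid, hmin⟩ := h
  let e := (Pi.basisFun Q (Fin p)).toDualEquiv
  refine ⟨e.symm.toLinearMap ∘ₗ r.dualMap, Λ.dualMap ∘ₗ e.toLinearMap, ?_, ?_⟩
  · refine LinearMap.ext fun c ↦ e.injective ?_
    refine LinearMap.ext fun x ↦ ?_
    simpa using congrArg (e c) (LinearMap.congr_fun hid x)
  · convert hmin.dualMap using 1
    ext ψ x
    simp

theorem finrank_le_of_surjective [Module.Finite Q N] (h : HasResidueRank d p)
    (hd : Function.Surjective d) : Module.finrank Q N ≤ p := by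
  obtain ⟨Λ, r, -, hmin⟩ := h
  have hminΛ : IsMinimalMap (d ∘ₗ r ∘ₗ Λ - LinearMap.id) := by
    refine .of_comp_surjective hd ?_
    convert hmin.neg using 1
    ext x
    simp
  have hsurj : Function.Surjective (d ∘ₗ r) :=
    Function.Surjective.of_comp (g := Λ) hminΛ.bijective_of_sub_id.2
  simpa using LinearMap.finrank_le_finrank_of_surjective hsurj

end HasResidueRank

theorem le_finrank_of_comp_eq_id [Module.Finite Q M] {d : M →ₗ[Q] N} {p : ℕ}
    {Λ : N →ₗ[Q] Fin p → Q} {r : (Fin p → Q) →ₗ[Q] M} (h : Λ ∘ₗ d ∘ₗ r = LinearMap.id) :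
    p ≤ Module.finrank Q M := by
  have hr : Function.Injective r := Function.Injective.of_comp (f := Λ ∘ₗ d) <| by
    rw [← LinearMap.coe_comp, LinearMap.comp_assoc, h]
    exact Function.injective_id
  simpa using LinearMap.finrank_le_finrank_of_injective hr

theorem exists_comp_eq_id_succ_of_not_isMinimalMap [Module.Free Q N] {d : M →ₗ[Q] N} {p : ℕ}
    {Λ : N →ₗ[Q] Fin p → Q} {r : (Fin p → Q) →ₗ[Q] M} (h : Λ ∘ₗ d ∘ₗ r = LinearMap.id)
    (hmin : ¬ IsMinimalMap (d - d ∘ₗ r ∘ₗ Λ ∘ₗ d)) :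
    ∃ (Λ' : N →ₗ[Q] Fin (p + 1) → Q) (r' : (Fin (p + 1) → Q) →ₗ[Q] M),
      Λ' ∘ₗ d ∘ₗ r' = LinearMap.id := by
  have h' (c) : Λ (d (r c)) = c := LinearMap.congr_fun h c
  simp only [IsMinimalMap, mem_maximalIdeal_smul_top_iff_forall_dual, not_forall] at hmin
  obtain ⟨x, φ, hφ⟩ := hmin
  rw [mem_maximalIdeal, mem_nonunits_iff, not_not] at hφ
  obtain ⟨u, hu⟩ := hφ.exists_left_inv
  set y := x - r (Λ (d x)) with hy
  have hΛy : Λ (d y) = 0 := by simp [hy, h']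
  have hφy : u * φ (d y) = 1 := by simpa [hy] using hu
  let φ' := u • (φ - φ ∘ₗ d ∘ₗ r ∘ₗ Λ)
  have hφ'y : φ' (d y) = 1 := by simp [φ', hΛy, hφy]
  have hφ'r (c) : φ' (d (r c)) = 0 := by simp [φ', h']
  refine ⟨LinearMap.pi (Fin.cons φ' fun i ↦ LinearMap.proj i ∘ₗ Λ),
    LinearMap.toSpanSingleton Q M y ∘ₗ LinearMap.proj 0 + r ∘ₗ LinearMap.funLeft Q Q Fin.succ,
    LinearMap.ext fun c ↦ funext fun i ↦ ?_⟩
  cases i using Fin.cases with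
  | zero => simp [hφ'y, hφ'r]
  | succ i => simp [hΛy, h', LinearMap.funLeft_apply]

theorem exists_hasResidueRank [Module.Finite Q M] [Module.Free Q N] (d : M →ₗ[Q] N) :
    ∃ p ≤ Module.finrank Q M, HasResidueRank d p := by
  classical
  let P (p : ℕ) : Prop := ∃ (Λ : N →ₗ[Q] Fin p → Q) (r : (Fin p → Q) →ₗ[Q] M),
    Λ ∘ₗ d ∘ₗ r = LinearMap.id
  have hPle {p} : P p → p ≤ Module.finrank Q M := fun ⟨_, _, h⟩ ↦ le_finrank_of_comp_eq_id h
  obtain ⟨Λ, r, h⟩ : P (Nat.findGreatest P (Module.finrank Q M)) :=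
    Nat.findGreatest_spec (Nat.zero_le _) ⟨0, 0, Subsingleton.elim _ _⟩
  refine ⟨_, Nat.findGreatest_le _, Λ, r, h, ?_⟩
  by_contra hmin
  have hsucc := exists_comp_eq_id_succ_of_not_isMinimalMap h hmin
  exact (Nat.lt_succ_self _).not_ge (Nat.le_findGreatest (hPle hsucc) hsucc)

end ResidueRank

/-! ### Minimizing a free resolution -/

section SplitKernel

variable {Q M N P : Type*} [CommRing Q] [AddCommGroup M] [Module Q M]
  [AddCommGroup N] [Module Q N] [AddCommGroup P] [Module Q P]
  {Λ : M →ₗ[Q] P} {s : P →ₗ[Q] M}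

theorem exists_ker_projection_of_comp_eq_id (h : Λ ∘ₗ s = LinearMap.id) :
    ∃ π : M →ₗ[Q] LinearMap.ker Λ,
      (∀ x, (π x : M) = x - s (Λ x)) ∧ π ∘ₗ (LinearMap.ker Λ).subtype = LinearMap.id := by
  have h' (c) : Λ (s c) = c := LinearMap.congr_fun h c
  refine ⟨(LinearMap.id - s ∘ₗ Λ).codRestrict _ fun x ↦ by simp [h'], fun x ↦ rfl, ?_⟩
  ext x
  simp

theorem finite_ker_of_comp_eq_id [Module.Finite Q M] (h : Λ ∘ₗ s = LinearMap.id) :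
    Module.Finite Q (LinearMap.ker Λ) := by
  obtain ⟨π, -, hπ⟩ := exists_ker_projection_of_comp_eq_id h
  exact Module.Finite.of_surjective π (LinearMap.surjective_of_comp_eq_id _ _ hπ)

theorem free_ker_of_comp_eq_id [IsLocalRing Q] [Module.Finite Q M] [Module.Free Q M]
    (h : Λ ∘ₗ s = LinearMap.id) : Module.Free Q (LinearMap.ker Λ) := by
  have := finite_ker_of_comp_eq_id h
  obtain ⟨π, -, hπ⟩ := exists_ker_projection_of_comp_eq_id h
  have := Module.Projective.of_split (LinearMap.ker Λ).subtype π hπ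
  exact Module.free_of_flat_of_isLocalRing

theorem finrank_ker_add_of_comp_eq_id [IsLocalRing Q] [Module.Finite Q M] [Module.Free Q M]
    [Module.Finite Q P] [Module.Free Q P] (h : Λ ∘ₗ s = LinearMap.id) :
    Module.finrank Q (LinearMap.ker Λ) + Module.finrank Q P = Module.finrank Q M := by
  have := finite_ker_of_comp_eq_id h
  have := free_ker_of_comp_eq_id h
  let e := (LinearMap.exact_subtype_ker_map Λ).splitSurjectiveEquiv
    (Submodule.injective_subtype _) ⟨s, h⟩
  rw [e.1.finrank_eq, Module.finrank_prod]

theorem isMinimalMap_of_subtype_ker_comp [IsLocalRing Q] (h : Λ ∘ₗ s = LinearMap.id)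
    {f : N →ₗ[Q] LinearMap.ker Λ} (hf : IsMinimalMap ((LinearMap.ker Λ).subtype ∘ₗ f)) :
    IsMinimalMap f := by
  obtain ⟨π, -, hπ⟩ := exists_ker_projection_of_comp_eq_id h
  have := hf.comp_left π
  rwa [← LinearMap.comp_assoc, hπ, LinearMap.id_comp] at this

end SplitKernel

section Minimize

variable {Q F₁ F₂ F₃ : Type*} [CommRing Q] [AddCommGroup F₁] [Module Q F₁]
  [AddCommGroup F₂] [Module Q F₂] [AddCommGroup F₃] [Module Q F₃] {I : Ideal Q}
  {d₁ : F₁ →ₗ[Q] Q} {d₂ : F₂ →ₗ[Q] F₁} {d₃ : F₃ →ₗ[Q] F₂} {p : ℕ}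

/-- The map `ker (Λ ∘ₗ d) → ker Λ` obtained from `d : M → N` by splitting off the block on which
`Λ ∘ₗ d` is invertible. -/
def cancelBlock {M N P : Type*} [AddCommGroup M] [Module Q M] [AddCommGroup N] [Module Q N]
    [AddCommGroup P] [Module Q P] (d : M →ₗ[Q] N) (Λ : N →ₗ[Q] P) :
    LinearMap.ker (Λ ∘ₗ d) →ₗ[Q] LinearMap.ker Λ :=
  d.restrict fun _ hx ↦ hx

theorem isMinimalMap_cancelBlock [IsLocalRing Q] {Λ : F₁ →ₗ[Q] Fin p → Q}
    {r : (Fin p → Q) →ₗ[Q] F₂} (h : Λ ∘ₗ d₂ ∘ₗ r = LinearMap.id)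
    (hmin : IsMinimalMap (d₂ - d₂ ∘ₗ r ∘ₗ Λ ∘ₗ d₂)) : IsMinimalMap (cancelBlock d₂ Λ) := by
  refine isMinimalMap_of_subtype_ker_comp h fun x ↦ ?_
  have hx : Λ (d₂ x) = 0 := x.2
  change d₂ x ∈ _
  simpa [hx] using hmin x

theorem IsResolution.cancel₃ (hres : IsResolution I d₁ d₂ d₃) {Λ : F₂ →ₗ[Q] Fin p → Q}
    {r : (Fin p → Q) →ₗ[Q] F₃} (h : Λ ∘ₗ d₃ ∘ₗ r = LinearMap.id) :
    IsResolution I d₁ (d₂ ∘ₗ (LinearMap.ker Λ).subtype) (cancelBlock d₃ Λ) where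
  range_eq := hres.range_eq
  exact₁ x := by
    obtain ⟨π, hπ, -⟩ := exists_ker_projection_of_comp_eq_id h
    refine (hres.exact₁ x).trans ⟨?_, fun ⟨y, hy⟩ ↦ ⟨y, hy⟩⟩
    rintro ⟨y, rfl⟩
    exact ⟨π y, by simp [hπ, hres.exact₂.apply_apply_eq_zero]⟩
  exact₂ x := by
    refine (hres.exact₂ x).trans ⟨?_, fun ⟨y, hy⟩ ↦ ⟨y, congrArg Subtype.val hy⟩⟩
    rintro ⟨y, hy⟩
    exact ⟨⟨y, by simp [hy]⟩, Subtype.ext hy⟩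
  injective x y hxy := Subtype.ext <| hres.injective <| congrArg Subtype.val hxy

theorem IsResolution.cancel₂ (hres : IsResolution I d₁ d₂ d₃) {Λ : F₁ →ₗ[Q] Fin p → Q}
    {r : (Fin p → Q) →ₗ[Q] F₂} (h : Λ ∘ₗ d₂ ∘ₗ r = LinearMap.id) :
    IsResolution I (d₁ ∘ₗ (LinearMap.ker Λ).subtype) (cancelBlock d₂ Λ)
      (d₃.codRestrict (LinearMap.ker (Λ ∘ₗ d₂))
        fun x ↦ by simp [hres.exact₂.apply_apply_eq_zero]) where
  range_eq := by
    obtain ⟨π, hπ, -⟩ := exists_ker_projection_of_comp_eq_id h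
    rw [← hres.range_eq]
    refine le_antisymm (LinearMap.range_comp_le_range _ _) ?_
    rintro _ ⟨y, rfl⟩
    exact ⟨π y, by simp [hπ, hres.exact₁.apply_apply_eq_zero]⟩
  exact₁ x := by
    refine (hres.exact₁ x).trans ⟨?_, fun ⟨y, hy⟩ ↦ ⟨y, congrArg Subtype.val hy⟩⟩
    rintro ⟨y, hy⟩
    exact ⟨⟨y, by simp [hy]⟩, Subtype.ext hy⟩
  exact₂ x := by
    refine Subtype.ext_iff.trans <| (hres.exact₂ x).trans
      ⟨fun ⟨y, hy⟩ ↦ ⟨y, Subtype.ext hy⟩, fun ⟨y, hy⟩ ↦ ⟨y, congrArg Subtype.val hy⟩⟩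
  injective x y hxy := hres.injective <| congrArg Subtype.val hxy

theorem IsResolution.congr {G₁ G₂ G₃ : Type*} [AddCommGroup G₁] [Module Q G₁] [AddCommGroup G₂]
    [Module Q G₂] [AddCommGroup G₃] [Module Q G₃] (hres : IsResolution I d₁ d₂ d₃)
    (e₁ : G₁ ≃ₗ[Q] F₁) (e₂ : G₂ ≃ₗ[Q] F₂) (e₃ : G₃ ≃ₗ[Q] F₃) :
    IsResolution I (d₁ ∘ₗ e₁.toLinearMap) (e₁.symm.toLinearMap ∘ₗ d₂ ∘ₗ e₂.toLinearMap)
      (e₂.symm.toLinearMap ∘ₗ d₃ ∘ₗ e₃.toLinearMap) where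
  range_eq := by rw [LinearMap.range_comp_of_range_eq_top _ e₁.range, hres.range_eq]
  exact₁ x := by
    simpa [e₁.symm_apply_eq, e₂.surjective.exists] using hres.exact₁ (e₁ x)
  exact₂ x := by
    simpa [e₂.symm_apply_eq, e₃.surjective.exists] using hres.exact₂ (e₂ x)
  injective := e₂.symm.injective.comp (hres.injective.comp e₃.injective)

variable [IsLocalRing Q] [Module.Free Q F₁] [Module.Finite Q F₁] [Module.Free Q F₂]
  [Module.Finite Q F₂] [Module.Free Q F₃] [Module.Finite Q F₃]

theorem IsResolution.hasResolutionFormat_of_isMinimalMap (hres : IsResolution I d₁ d₂ d₃)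
    (hI : I ≤ maximalIdeal Q) (h₂ : IsMinimalMap d₂) (h₃ : IsMinimalMap d₃)
    (hrank : Module.finrank Q F₂ = Module.finrank Q F₁ + Module.finrank Q F₃ - 1) :
    HasResolutionFormat I (Module.finrank Q F₁) (Module.finrank Q F₃) := by
  let e₁ := (Module.finBasis Q F₁).equivFun.symm
  let e₂ := (Module.finBasisOfFinrankEq Q F₂ hrank).equivFun.symm
  let e₃ := (Module.finBasis Q F₃).equivFun.symm
  have hres' := hres.congr e₁ e₂ e₃
  refine ⟨_, _, _, hres'.range_eq, hres'.exact₁.linearMap_ker_eq.symm,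
    hres'.exact₂.linearMap_ker_eq.symm, LinearMap.ker_eq_bot.2 hres'.injective, hI, ?_, ?_⟩
  · rintro _ ⟨x, rfl⟩
    exact (h₂.comp_right e₂.toLinearMap).comp_left _ x
  · rintro _ ⟨x, rfl⟩
    exact (h₃.comp_right e₃.toLinearMap).comp_left _ x

theorem IsResolution.hasResolutionFormat_of_isMinimalMap_of_hasResidueRank
    (hres : IsResolution I d₁ d₂ d₃) (hI : I ≤ maximalIdeal Q)
    (hrank : Module.finrank Q F₂ + 1 = Module.finrank Q F₁ + Module.finrank Q F₃) {m : ℕ}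
    (h₂ : HasResidueRank d₂ p) (h₃ : IsMinimalMap d₃) (hm : m + p = Module.finrank Q F₁) :
    HasResolutionFormat I m (Module.finrank Q F₃) := by
  obtain ⟨Λ, r, hid, hmin⟩ := h₂
  have hidr : (Λ ∘ₗ d₂) ∘ₗ r = LinearMap.id := hid
  have := finite_ker_of_comp_eq_id hid
  have := free_ker_of_comp_eq_id hid
  have := finite_ker_of_comp_eq_id hidr
  have := free_ker_of_comp_eq_id hidr
  have hk₁ := finrank_ker_add_of_comp_eq_id hid
  have hk₂ := finrank_ker_add_of_comp_eq_id hidr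
  rw [Module.finrank_fin_fun] at hk₁ hk₂
  obtain rfl : Module.finrank Q (LinearMap.ker Λ) = m := by omega
  exact (hres.cancel₂ hid).hasResolutionFormat_of_isMinimalMap hI
    (isMinimalMap_cancelBlock hid hmin) (isMinimalMap_of_subtype_ker_comp hidr h₃) (by omega)

theorem IsResolution.hasResolutionFormat_of_hasResidueRank (hres : IsResolution I d₁ d₂ d₃)
    (hI : I ≤ maximalIdeal Q)
    (hrank : Module.finrank Q F₂ + 1 = Module.finrank Q F₁ + Module.finrank Q F₃) {q m n : ℕ}
    (h₂ : HasResidueRank d₂ p) (h₃ : HasResidueRank d₃ q) (hm : m + p = Module.finrank Q F₁)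
    (hn : n + q = Module.finrank Q F₃) : HasResolutionFormat I m n := by
  obtain ⟨Λ, r, hid, hmin⟩ := h₃
  obtain ⟨π, hπ, hπid⟩ := exists_ker_projection_of_comp_eq_id hid
  have hrank₂ : HasResidueRank (d₂ ∘ₗ (LinearMap.ker Λ).subtype) p := by
    refine .of_comp_surjective (LinearMap.surjective_of_comp_eq_id _ _ hπid) ?_
    convert h₂ using 1
    ext x
    simp [hπ, hres.exact₂.apply_apply_eq_zero]
  have hidr : (Λ ∘ₗ d₃) ∘ₗ r = LinearMap.id := hid
  have := finite_ker_of_comp_eq_id hid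
  have := free_ker_of_comp_eq_id hid
  have := finite_ker_of_comp_eq_id hidr
  have := free_ker_of_comp_eq_id hidr
  have hk₂ := finrank_ker_add_of_comp_eq_id hid
  have hk₃ := finrank_ker_add_of_comp_eq_id hidr
  rw [Module.finrank_fin_fun] at hk₂ hk₃
  obtain rfl : Module.finrank Q (LinearMap.ker (Λ ∘ₗ d₃)) = n := by omega
  exact (hres.cancel₃ hid).hasResolutionFormat_of_isMinimalMap_of_hasResidueRank hI (by omega)
    hrank₂ (isMinimalMap_cancelBlock hid hmin) hm

end Minimize

/-! ### Linkage of ideals with prescribed format -/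

section KoszulRelation

variable {Q F₁ F₂ F₃ : Type*} [CommRing Q] [AddCommGroup F₁] [Module Q F₁]
  [AddCommGroup F₂] [Module Q F₂] [AddCommGroup F₃] [Module Q F₃] {I : Ideal Q}
  {d₁ : F₁ →ₗ[Q] Q} {d₂ : F₂ →ₗ[Q] F₁} {d₃ : F₃ →ₗ[Q] F₂}

/-- The Koszul relation `d₁ u • v - d₁ v • u`, bilinear in `u` and `v`. -/
def koszulRelation (d₁ : F₁ →ₗ[Q] Q) : F₁ →ₗ[Q] F₁ →ₗ[Q] F₁ :=
  LinearMap.lsmul Q F₁ ∘ₗ d₁ - (LinearMap.lsmul Q F₁ ∘ₗ d₁).flip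

@[simp]
theorem koszulRelation_apply (d₁ : F₁ →ₗ[Q] Q) (u v : F₁) :
    koszulRelation d₁ u v = d₁ u • v - d₁ v • u := rfl

theorem linearCombination_crossProduct (v : Fin 3 → F₁) (y : Fin 3 → Q) :
    Fintype.linearCombination Q v ((d₁ ∘ v) ⨯₃ y) = y 0 • koszulRelation d₁ (v 2) (v 1) +
      y 1 • koszulRelation d₁ (v 0) (v 2) + y 2 • koszulRelation d₁ (v 1) (v 0) := by
  simp only [linearCombination_fin_three, cross_apply, koszulRelation_apply, Function.comp_apply,
    Matrix.cons_val]
  module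

theorem IsResolution.exists_isKoszulLift_of_comm₂ (hres : IsResolution I d₁ d₂ d₃)
    {v : Fin 3 → F₁} {α₂ : (Fin 3 → Q) →ₗ[Q] F₂}
    (hα₂ : ∀ y, d₂ (α₂ y) = Fintype.linearCombination Q v ((d₁ ∘ v) ⨯₃ y)) :
    ∃ w, IsKoszulLift d₁ d₂ d₃ v α₂ w := by
  obtain ⟨w, hw⟩ := (hres.exact₂ (α₂ (d₁ ∘ v))).1 (by simp [hα₂])
  exact ⟨w, hα₂, hw⟩

theorem IsResolution.exists_isKoszulLift (hres : IsResolution I d₁ d₂ d₃) (v : Fin 3 → F₁) :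
    ∃ α₂ w, IsKoszulLift d₁ d₂ d₃ v α₂ w := by
  obtain ⟨α₂, hα₂⟩ :
      ∃ α₂, d₂ ∘ₗ α₂ = Fintype.linearCombination Q v ∘ₗ crossProduct (d₁ ∘ v) := by
    refine exists_comp_eq_of_range_le ?_
    rintro _ ⟨y, rfl⟩
    rw [← hres.exact₁.linearMap_ker_eq]
    simp only [LinearMap.comp_apply, Function.comp_apply, linearCombination_fin_three, cross_apply,
      Matrix.cons_val, LinearMap.mem_ker, map_add, map_smul, smul_eq_mul]
    ring
  exact ⟨α₂, hres.exists_isKoszulLift_of_comm₂ (LinearMap.congr_fun hα₂)⟩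

/- Replacing the third element by a multiple amounts to composing with the map of Koszul complexes
whose degree `2` component is `diag(s, s, 1)`. -/
theorem IsKoszulLift.smul_last {v : Fin 3 → F₁} {α₂ : (Fin 3 → Q) →ₗ[Q] F₂} {w : F₃}
    (hlift : IsKoszulLift d₁ d₂ d₃ v α₂ w) (s : Q) :
    IsKoszulLift d₁ d₂ d₃ ![v 0, v 1, s • v 2]
      (α₂ ∘ₗ (Matrix.diagonal ![s, s, 1]).toLin') (s • w) where
  comm₂ y := by
    simp only [LinearMap.comp_apply, hlift.comm₂, linearCombination_fin_three, cross_apply,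
      Matrix.toLin'_apply, Matrix.mulVec_diagonal, Function.comp_apply, Matrix.cons_val, map_smul,
      smul_eq_mul]
    module
  comm₃ := by
    rw [map_smul, hlift.comm₃, ← map_smul, LinearMap.comp_apply]
    congr 1
    ext i
    fin_cases i <;> simp [Matrix.mulVec_diagonal]

variable [IsLocalRing Q]

theorem koszulRelation_mem_map_of_mem [Module.Projective Q F₁] (hexact : Function.Exact d₂ d₁)
    {u : F₁} (hu : u ∈ maximalIdeal Q • (⊤ : Submodule Q F₁)) (v : F₁) :
    koszulRelation d₁ u v ∈ Submodule.map d₂ (maximalIdeal Q • ⊤) := by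
  obtain ⟨k, hk⟩ : ∃ k, d₂ ∘ₗ k = (koszulRelation d₁).flip v := by
    refine exists_comp_eq_of_range_le ?_
    rintro _ ⟨x, rfl⟩
    simp [← hexact.linearMap_ker_eq, mul_comm]
  exact ⟨k u, map_mem_maximalIdeal_smul_top k hu, LinearMap.congr_fun hk u⟩

theorem koszulRelation_mem_map_of_sub_mem [Module.Projective Q F₁]
    (hexact : Function.Exact d₂ d₁) {u u' v v' : F₁}
    (hu : u' - u ∈ maximalIdeal Q • (⊤ : Submodule Q F₁))
    (hv : v' - v ∈ maximalIdeal Q • (⊤ : Submodule Q F₁))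
    (h : koszulRelation d₁ u v ∈ Submodule.map d₂ (maximalIdeal Q • ⊤)) :
    koszulRelation d₁ u' v' ∈ Submodule.map d₂ (maximalIdeal Q • ⊤) := by
  have hexpand : koszulRelation d₁ u' v' =
      koszulRelation d₁ u v + koszulRelation d₁ (u' - u) v - koszulRelation d₁ (v' - v) u' := by
    simp only [koszulRelation_apply]
    simp only [map_sub]
    module
  rw [hexpand]
  exact sub_mem (add_mem h (koszulRelation_mem_map_of_mem hexact hu v))
    (koszulRelation_mem_map_of_mem hexact hv u')

/- If `d₁ u = s * b` and `d₁ v = s * c`, the relation is `s` times the syzygy `b • v - c • u`. -/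
theorem koszulRelation_mem_map_of_dvd (hexact : Function.Exact d₂ d₁) {s : Q}
    (hs : s ∈ maximalIdeal Q) {u v : F₁} (hu : s ∣ d₁ u) (hv : s ∣ d₁ v) :
    koszulRelation d₁ u v ∈ Submodule.map d₂ (maximalIdeal Q • ⊤) := by
  obtain ⟨b, hb⟩ := hu
  obtain ⟨c, hc⟩ := hv
  obtain ⟨y, hy⟩ := (hexact (b • v - c • u)).1 (by simp [hb, hc]; ring)
  exact ⟨s • y, Submodule.smul_mem_smul hs trivial, by simp [hy, hb, hc, smul_sub, mul_smul]⟩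

theorem IsResolution.exists_isKoszulLift_isMinimalMap (hres : IsResolution I d₁ d₂ d₃)
    {v : Fin 3 → F₁} (hv : ∀ i j, koszulRelation d₁ (v i) (v j) ∈
      Submodule.map d₂ (maximalIdeal Q • ⊤)) :
    ∃ α₂ w, IsKoszulLift d₁ d₂ d₃ v α₂ w ∧ IsMinimalMap α₂ := by
  obtain ⟨k, hk⟩ : ∃ k, (d₂ ∘ₗ (maximalIdeal Q • (⊤ : Submodule Q F₂)).subtype) ∘ₗ k =
      Fintype.linearCombination Q v ∘ₗ crossProduct (d₁ ∘ v) := by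
    refine exists_comp_eq_of_range_le ?_
    rintro _ ⟨y, rfl⟩
    rw [LinearMap.range_comp, Submodule.range_subtype, LinearMap.comp_apply,
      linearCombination_crossProduct]
    exact add_mem (add_mem (Submodule.smul_mem _ _ (hv 2 1)) (Submodule.smul_mem _ _ (hv 0 2)))
      (Submodule.smul_mem _ _ (hv 1 0))
  obtain ⟨w, hw⟩ := hres.exists_isKoszulLift_of_comm₂
    (α₂ := (maximalIdeal Q • (⊤ : Submodule Q F₂)).subtype ∘ₗ k) (LinearMap.congr_fun hk)
  exact ⟨_, w, hw, fun y ↦ (k y).2⟩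

end KoszulRelation

section Colon

variable {Q F₁ F₂ F₃ : Type*} [CommRing Q] [AddCommGroup F₁] [Module Q F₁] [AddCommGroup F₂]
  [Module Q F₂] [AddCommGroup F₃] [Module Q F₃] {I : Ideal Q} {d₁ : F₁ →ₗ[Q] Q}
  {d₂ : F₂ →ₗ[Q] F₁} {d₃ : F₃ →ₗ[Q] F₂}

theorem mem_colon_span_range {ι : Type*} (a : ι → Q) (i : ι) :
    a i ∈ (Ideal.span (Set.range a)).colon (I : Set Q) :=
  Submodule.mem_colon.2 fun c _ ↦ Ideal.mul_mem_right c _ (Ideal.subset_span ⟨i, rfl⟩)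

theorem directlyLinked_colon {a : Fin 3 → Q} (ha : ∀ i, a i ∈ I)
    (hreg : IsRegular Q (List.ofFn a)) :
    DirectlyLinked I ((Ideal.span (Set.range a)).colon (I : Set Q)) := by
  refine ⟨a 0, a 1, a 2, ha 0, ha 1, ha 2, hreg, ?_⟩
  congr 2
  ext x
  simp [Fin.exists_fin_succ, eq_comm]

theorem IsResolution.surjective_coprod_of_colon_eq_top {ι : Type*} [Fintype ι]
    {v : ι → F₁} (hres : IsResolution I d₁ d₂ d₃)
    (htop : (Ideal.span (Set.range (d₁ ∘ v))).colon (I : Set Q) = ⊤) :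
    Function.Surjective (d₂.coprod (Fintype.linearCombination Q v)) := by
  intro x
  have hx : d₁ x ∈ LinearMap.range (Fintype.linearCombination Q (d₁ ∘ v)) := by
    rw [Fintype.range_linearCombination]
    exact (Submodule.colon_eq_top_iff_subset _).1 htop (hres.range_eq ▸ ⟨x, rfl⟩)
  obtain ⟨c, hc⟩ := hx
  obtain ⟨y, hy⟩ := (hres.exact₁ (x - Fintype.linearCombination Q v c)).1
    (by rw [map_sub, map_linearCombination, hc, sub_self])
  exact ⟨(y, c), by simp [hy]⟩

end Colon

theorem finrank_dual (Q M : Type*) [CommRing Q] [AddCommGroup M] [Module Q M]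
    [Module.Free Q M] [Module.Finite Q M] :
    Module.finrank Q (Module.Dual Q M) = Module.finrank Q M :=
  (Module.Free.chooseBasis Q M).toDualEquiv.finrank_eq.symm

section LinkFormat

variable {Q F₁ F₂ F₃ : Type*} [CommRing Q] [IsLocalRing Q] [AddCommGroup F₁] [Module Q F₁]
  [AddCommGroup F₂] [Module Q F₂] [AddCommGroup F₃] [Module Q F₃] {I : Ideal Q}
  {d₁ : F₁ →ₗ[Q] Q} {d₂ : F₂ →ₗ[Q] F₁} {d₃ : F₃ →ₗ[Q] F₂} {v : Fin 3 → F₁}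
  {α₂ : (Fin 3 → Q) →ₗ[Q] F₂} {w : F₃} {p q : ℕ}

theorem HasResidueRank.linkMap_of_isMinimalMap_right {a : Fin 3 → Q}
    (ha : ∀ i, a i ∈ maximalIdeal Q) (hα₂ : IsMinimalMap α₂) (h : HasResidueRank d₃ p) :
    HasResidueRank (linkMap d₃ α₂ a) p := by
  refine (h.comp (LinearMap.fst_comp_inl Q F₂ (Fin 3 → Q))
    (LinearMap.fst_comp_inl Q F₃ (Fin 3 → Q))).congr ?_
  convert ((hα₂.comp_left (.inl Q F₂ (Fin 3 → Q))).sub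
    ((IsMinimalMap.crossProduct ha).comp_left (.inr Q F₂ _))).comp_right (.snd Q F₃ _) using 1
  ext <;> simp

theorem HasResidueRank.linkMap_of_isMinimalMap_left {a : Fin 3 → Q}
    (ha : ∀ i, a i ∈ maximalIdeal Q) (hd₃ : IsMinimalMap d₃) (h : HasResidueRank α₂ p) :
    HasResidueRank (linkMap d₃ α₂ a) p := by
  refine (h.comp (LinearMap.fst_comp_inl Q F₂ (Fin 3 → Q))
    (LinearMap.snd_comp_inr Q F₃ (Fin 3 → Q))).congr ?_
  convert ((hd₃.comp_left (.inl Q F₂ (Fin 3 → Q))).comp_right (.fst Q F₃ (Fin 3 → Q))).sub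
    (((IsMinimalMap.crossProduct ha).comp_left (.inr Q F₂ _)).comp_right (.snd Q F₃ _)) using 1
  ext <;> simp

theorem HasResidueRank.coprod_linearCombination {ι : Type*} [Fintype ι] {v t : ι → F₁}
    {θ : F₂ →ₗ[Q] ι → Q}
    (hd₂ : IsMinimalMap (d₂ - Fintype.linearCombination Q t ∘ₗ θ))
    (hv : ∀ i, v i - t i ∈ maximalIdeal Q • (⊤ : Submodule Q F₁))
    (h : HasResidueRank (Fintype.linearCombination Q t) p) :
    HasResidueRank (d₂.coprod (Fintype.linearCombination Q v)) p := by
  classical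
  refine (h.comp (i := .id) (j := .id) rfl
    (LinearMap.coprod_inr θ (.id : (ι → Q) →ₗ[Q] _))).congr ?_
  convert (hd₂.comp_right (.fst Q F₂ (ι → Q))).add
    ((IsMinimalMap.linearCombination hv).comp_right (.snd Q F₂ (ι → Q))) using 1
  ext <;> simp

/-- `I` contains a regular sequence of length `3` and has resolution format `(1, m, m + n - 1, n)`.
Unlike in `IsGrade3PerfectOfFormat`, the regular sequence is a family indexed by `Fin 3` and no
bounds on `m` and `n` are included. -/
def HasGrade3Format (I : Ideal Q) (m n : ℕ) : Prop :=
  (∃ a : Fin 3 → Q, (∀ i, a i ∈ I) ∧ IsRegular Q (List.ofFn a)) ∧ HasResolutionFormat I m n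

theorem isGrade3PerfectOfFormat_iff {m n : ℕ} :
    IsGrade3PerfectOfFormat I m n ↔ 3 ≤ m ∧ 1 ≤ n ∧ HasGrade3Format I m n := by
  refine ⟨?_, ?_⟩
  · rintro ⟨⟨x, y, z, hx, hy, hz, hreg⟩, hm, hn, hI⟩
    have hmem (i) : ![x, y, z] i ∈ I := by fin_cases i <;> assumption
    exact ⟨hm, hn, ⟨_, hmem, by simpa using hreg⟩, hI⟩
  · rintro ⟨hm, hn, ⟨a, ha, hreg⟩, hI⟩
    exact ⟨⟨a 0, a 1, a 2, ha 0, ha 1, ha 2, hreg⟩, hm, hn, hI⟩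

theorem HasResolutionFormat.exists_isResolution {m n : ℕ} (h : HasResolutionFormat I m n) :
    ∃ (d₁ : (Fin m → Q) →ₗ[Q] Q) (d₂ : (Fin (m + n - 1) → Q) →ₗ[Q] Fin m → Q)
      (d₃ : (Fin n → Q) →ₗ[Q] Fin (m + n - 1) → Q), IsResolution I d₁ d₂ d₃ ∧
        I ≤ maximalIdeal Q ∧ IsMinimalMap d₂ ∧ IsMinimalMap d₃ := by
  obtain ⟨d₁, d₂, d₃, h₁, h₂, h₃, hinj, hI, hmin₂, hmin₃⟩ := h
  exact ⟨d₁, d₂, d₃, ⟨h₁, LinearMap.exact_iff.2 h₂.symm, LinearMap.exact_iff.2 h₃.symm,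
    LinearMap.ker_eq_bot.1 hinj⟩, hI, fun x ↦ hmin₂ ⟨x, rfl⟩, fun x ↦ hmin₃ ⟨x, rfl⟩⟩

theorem hasGrade3Format_span_range {a : Fin 3 → Q} (hreg : IsRegular Q (List.ofFn a)) :
    HasGrade3Format (Ideal.span (Set.range a)) 3 1 := by
  have ha (i) : a i ∈ maximalIdeal Q :=
    mem_maximalIdeal_of_isRegular hreg (List.mem_ofFn.2 ⟨i, rfl⟩)
  have hres : IsResolution (Ideal.span (Set.range a)) (Fintype.linearCombination Q a)
      (crossProduct a) (LinearMap.toSpanSingleton Q _ a) :=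
    { range_eq := Fintype.range_linearCombination Q a
      exact₁ := exact_crossProduct_linearCombination hreg.toIsWeaklyRegular
      exact₂ := exact_toSpanSingleton_crossProduct hreg.toIsWeaklyRegular
      injective := (injective_iff_map_eq_zero _).2 fun c hc ↦
        (isWeaklyRegular_triple_apply hreg.toIsWeaklyRegular).1 c <|
          (mul_comm _ _).trans (congrFun hc 0) }
  refine ⟨⟨a, fun i ↦ Ideal.subset_span ⟨i, rfl⟩, hreg⟩, ?_⟩
  simpa using hres.hasResolutionFormat_of_isMinimalMap
    (Ideal.span_le.2 (Set.range_subset_iff.2 ha)) (.crossProduct ha)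
    (fun c ↦ Submodule.smul_mem _ c (mem_maximalIdeal_smul_top_pi_iff.2 ha)) (by simp)

variable [Module.Free Q F₁] [Module.Finite Q F₁] [Module.Free Q F₂] [Module.Finite Q F₂]
  [Module.Free Q F₃] [Module.Finite Q F₃]

theorem IsResolution.hasGrade3Format_colon (hres : IsResolution I d₁ d₂ d₃)
    (hlift : IsKoszulLift d₁ d₂ d₃ v α₂ w) (hreg : IsRegular Q (List.ofFn (d₁ ∘ v)))
    (hcoprod : HasResidueRank (d₂.coprod (Fintype.linearCombination Q v)) p)
    (hlink : HasResidueRank (linkMap d₃ α₂ (d₁ ∘ v)) q)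
    (hrank : Module.finrank Q F₂ + 1 = Module.finrank Q F₁ + Module.finrank Q F₃) {m n : ℕ}
    (hm : m + q = Module.finrank Q F₃ + 3) (hn : n + p = Module.finrank Q F₁) (hn0 : 0 < n) :
    HasGrade3Format ((Ideal.span (Set.range (d₁ ∘ v))).colon (I : Set Q)) m n := by
  refine ⟨⟨d₁ ∘ v, mem_colon_span_range _, hreg⟩, ?_⟩
  refine (hres.link hlift hreg.toIsWeaklyRegular).hasResolutionFormat_of_hasResidueRank
    (le_maximalIdeal fun htop ↦ ?_) ?_ hlink.dualMap hcoprod.dualMap ?_ ?_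
  · have := hcoprod.finrank_le_of_surjective (hres.surjective_coprod_of_colon_eq_top htop)
    omega
  all_goals simp only [finrank_dual, Module.finrank_prod, Module.finrank_fin_fun]; omega

end LinkFormat

section LinkExists

variable {Q F₁ F₂ F₃ : Type*} [CommRing Q] [IsLocalRing Q] [IsNoetherianRing Q]
  [AddCommGroup F₁] [Module Q F₁] [AddCommGroup F₂] [Module Q F₂] [AddCommGroup F₃] [Module Q F₃]
  [Module.Free Q F₁] [Module.Finite Q F₁] [Module.Free Q F₂] [Module.Finite Q F₂]
  [Module.Free Q F₃] [Module.Finite Q F₃] {I : Ideal Q}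
  {d₁ : F₁ →ₗ[Q] Q} {d₂ : F₂ →ₗ[Q] F₁} {d₃ : F₃ →ₗ[Q] F₂}

/- Divisibility of the `d₁ (t i)` by `s` puts the Koszul relations of `t`, hence those of a regular
perturbation of `t`, into `d₂ (𝔫 F₂)`, so that the Koszul lift is minimal in degree `2`. -/
theorem IsResolution.exists_directlyLinked_of_dvd (hres : IsResolution I d₁ d₂ d₃)
    (hI : I ≤ maximalIdeal Q) {a : Fin 3 → Q} (ha : ∀ i, a i ∈ I)
    (hreg : IsRegular Q (List.ofFn a))
    (hrank : Module.finrank Q F₂ + 1 = Module.finrank Q F₁ + Module.finrank Q F₃)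
    {s : Q} (hs : s ∈ maximalIdeal Q) {t : Fin 3 → F₁} (ht : ∀ i, s ∣ d₁ (t i))
    {θ : F₂ →ₗ[Q] Fin 3 → Q} (hd₂ : IsMinimalMap (d₂ - Fintype.linearCombination Q t ∘ₗ θ))
    {p q m n : ℕ} (hp : HasResidueRank (Fintype.linearCombination Q t) p)
    (hq : HasResidueRank d₃ q) (hm : m + q = Module.finrank Q F₃ + 3)
    (hn : n + p = Module.finrank Q F₁) (hn0 : 0 < n) :
    ∃ J, DirectlyLinked I J ∧ HasGrade3Format J m n := by
  have hrange := hres.range_eq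
  obtain ⟨v, hv, hregv⟩ := exists_isRegular_ofFn (hrange ▸ hI) (hrange ▸ ha) hreg t
  obtain ⟨α₂, w, hlift, hα₂⟩ := hres.exists_isKoszulLift_isMinimalMap fun i j ↦
    koszulRelation_mem_map_of_sub_mem hres.exact₁ (hv i) (hv j)
      (koszulRelation_mem_map_of_dvd hres.exact₁ hs (ht i) (ht j))
  have hmax (i) : d₁ (v i) ∈ maximalIdeal Q := hI (hrange ▸ ⟨v i, rfl⟩)
  exact ⟨_, directlyLinked_colon (fun i ↦ hrange ▸ ⟨v i, rfl⟩) hregv,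
    hres.hasGrade3Format_colon hlift hregv (.coprod_linearCombination hd₂ hv hp)
      (.linkMap_of_isMinimalMap_right hmax hα₂ hq) hrank hm hn hn0⟩

theorem HasGrade3Format.exists_directlyLinked_add_three {m n : ℕ} (h : HasGrade3Format I m n)
    (hm : 1 ≤ m) : ∃ J, DirectlyLinked I J ∧ HasGrade3Format J (n + 3) m := by
  obtain ⟨⟨a, ha, hreg⟩, hformat⟩ := h
  obtain ⟨d₁, d₂, d₃, hres, hI, hd₂, hd₃⟩ := hformat.exists_isResolution
  have hzero : IsMinimalMap (Fintype.linearCombination Q (0 : Fin 3 → Fin m → Q)) :=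
    .linearCombination fun _ ↦ zero_mem _
  exact hres.exists_directlyLinked_of_dvd hI ha hreg (by simp; omega) (zero_mem _) (t := 0)
    (by simp) (θ := 0) (by simpa using hd₂) hzero.hasResidueRank_zero hd₃.hasResidueRank_zero
    (by simp) (by simp) hm

/- The regular sequence is chosen among minimal generators, so that the three generators cancel;
`c` counts the Koszul relations among the minimal syzygies of `I`. -/
theorem HasGrade3Format.exists_directlyLinked_sub_three {m n : ℕ} (h : HasGrade3Format I m n)
    (hm : 4 ≤ m) : ∃ c ≤ 3, ∃ J, DirectlyLinked I J ∧ HasGrade3Format J (n + 3 - c) (m - 3) := by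
  obtain ⟨⟨a, ha, hreg⟩, hformat⟩ := h
  obtain ⟨d₁, d₂, d₃, hres, hI, hd₂, hd₃⟩ := hformat.exists_isResolution
  have hrange := hres.range_eq
  let e : Fin 3 → Fin m := Fin.castLE (by omega)
  let t : Fin 3 → Fin m → Q := fun i ↦ Pi.single (e i) 1
  obtain ⟨v, hv, hregv⟩ := exists_isRegular_ofFn (hrange ▸ hI) (hrange ▸ ha) hreg t
  obtain ⟨α₂, w, hlift⟩ := hres.exists_isKoszulLift v
  obtain ⟨c, hc, hα₂⟩ := exists_hasResidueRank α₂
  rw [Module.finrank_fin_fun] at hc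
  have hmax (i) : d₁ (v i) ∈ maximalIdeal Q := hI (hrange ▸ ⟨v i, rfl⟩)
  exact ⟨c, hc, _, directlyLinked_colon (fun i ↦ hrange ▸ ⟨v i, rfl⟩) hregv,
    hres.hasGrade3Format_colon hlift hregv
      (.coprod_linearCombination (θ := 0) (by simpa using hd₂) hv
        (hasResidueRank_linearCombination_single (Fin.castLE_injective _)))
      (.linkMap_of_isMinimalMap_left hmax hd₃ hα₂) (by simp; omega) (by simp; omega)
      (by simp; omega) (by omega)⟩

end LinkExists

section DoubleLink

variable {Q F₁ F₂ F₃ : Type*} [CommRing Q] [AddCommGroup F₁] [Module Q F₁] [AddCommGroup F₂]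
  [Module Q F₂] [AddCommGroup F₃] [Module Q F₃] {I : Ideal Q} {d₁ : F₁ →ₗ[Q] Q}
  {d₂ : F₂ →ₗ[Q] F₁} {d₃ : F₃ →ₗ[Q] F₂} {f g : Module.Dual Q F₃}

/-- Three generators of a link, as elements of the degree `1` term `(F₃ × Q³)*` of its resolution:
the third coordinate of `Q³` and two functionals `f`, `g` on `F₃`. They specify the regular sequence
of the second link. -/
def linkGenerators (f g : Module.Dual Q F₃) : Fin 3 → Module.Dual Q (F₃ × (Fin 3 → Q)) :=
  ![LinearMap.proj 2 ∘ₗ LinearMap.snd Q _ _, f ∘ₗ LinearMap.fst Q _ _, g ∘ₗ LinearMap.fst Q _ _]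

theorem dvd_eval_linkGenerators {s : Q} {a : Fin 3 → Q} (ha : s ∣ a 2) (w : F₃) (i : Fin 3) :
    s ∣ Module.Dual.eval Q (F₃ × (Fin 3 → Q)) (s • w, -a) (linkGenerators f g i) := by
  fin_cases i <;> simp [linkGenerators, ha]

variable [IsLocalRing Q]

theorem hasResidueRank_linearCombination_linkGenerators {x y : F₃} (hfx : f x = 1) (hfy : f y = 0)
    (hgx : g x = 0) (hgy : g y = 1) :
    HasResidueRank (Fintype.linearCombination Q (linkGenerators f g)) 3 := by
  refine hasResidueRank_of_leftInverse (Λ := LinearMap.pi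
    ![Module.Dual.eval Q _ (0, Pi.single 2 1), Module.Dual.eval Q _ (x, 0),
      Module.Dual.eval Q _ (y, 0)]) ?_
  ext i j
  fin_cases i <;> fin_cases j <;> simp [linkGenerators, hfx, hfy, hgx, hgy]

theorem exists_isMinimalMap_dualMap_linkMap_sub [Module.Free Q F₃] [Module.Finite Q F₃]
    (hd₃ : IsMinimalMap d₃) (β₂ : (Fin 3 → Q) →ₗ[Q] F₂) {s : Q} (hs : s ∈ maximalIdeal Q)
    {a : Fin 3 → Q} (ha : ∀ i, a i ∈ maximalIdeal Q) (f g : Module.Dual Q F₃) :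
    ∃ θ, IsMinimalMap ((linkMap d₃ (β₂ ∘ₗ (Matrix.diagonal ![s, s, 1]).toLin') a).dualMap -
      Fintype.linearCombination Q (linkGenerators f g) ∘ₗ θ) := by
  let θ : Module.Dual Q (F₂ × (Fin 3 → Q)) →ₗ[Q] Fin 3 → Q :=
    LinearMap.single Q _ 0 ∘ₗ Module.Dual.eval Q _ (β₂ (Pi.single 2 1), 0)
  refine ⟨θ, fun ψ ↦ mem_maximalIdeal_smul_top_dual_iff.2 fun ⟨u, y⟩ ↦ ?_⟩
  have hdiag : (Matrix.diagonal ![s, s, 1]).toLin' y =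
      s • ![y 0, y 1, 0] + y 2 • Pi.single 2 1 := by
    ext i
    fin_cases i <;> simp [Matrix.mulVec_diagonal]
  have hmem := map_mem_maximalIdeal_smul_top ψ (prodMk_mem_maximalIdeal_smul_top
    (add_mem (hd₃ u) (Submodule.smul_mem_smul hs (Submodule.mem_top (x := β₂ ![y 0, y 1, 0]))))
    (neg_mem (IsMinimalMap.crossProduct ha y)))
  rw [smul_eq_mul, Ideal.mul_top] at hmem
  convert hmem using 1
  have hθ : Fintype.linearCombination Q (linkGenerators f g) (θ ψ) (u, y) =
      ψ (y 2 • (β₂ (Pi.single 2 1), 0)) := by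
    rw [map_smul]
    simp [θ, linkGenerators, mul_comm]
  rw [LinearMap.sub_apply, LinearMap.sub_apply, LinearMap.comp_apply, hθ, LinearMap.dualMap_apply,
    ← map_sub, linkMap_apply, LinearMap.comp_apply, hdiag, map_add, map_smul, map_smul,
    Prod.smul_mk, Prod.mk_sub_mk, smul_zero, sub_zero]
  abel_nf

variable [IsNoetherianRing Q] [Module.Free Q F₁] [Module.Finite Q F₁] [Module.Free Q F₂]
  [Module.Finite Q F₂] [Module.Free Q F₃] [Module.Finite Q F₃]

theorem IsResolution.exists_linked_of_isKoszulLift (hres : IsResolution I d₁ d₂ d₃)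
    (hI : I ≤ maximalIdeal Q) (hd₃ : IsMinimalMap d₃)
    (hrank : Module.finrank Q F₂ + 1 = Module.finrank Q F₁ + Module.finrank Q F₃)
    {v : Fin 3 → F₁} {β₂ : (Fin 3 → Q) →ₗ[Q] F₂} {w : F₃} (hlift : IsKoszulLift d₁ d₂ d₃ v β₂ w)
    (hreg : IsRegular Q (List.ofFn (d₁ ∘ v))) {p m : ℕ}
    (hp : HasResidueRank
      (d₂.coprod (Fintype.linearCombination Q ![v 0, v 1, d₁ (v 2) • v 2])) p)
    {x y : F₃} (hfx : f x = 1) (hfy : f y = 0) (hgx : g x = 0) (hgy : g y = 1)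
    (hm : m + p = Module.finrank Q F₁ + 3) (hn : 0 < Module.finrank Q F₃) :
    ∃ K, Linked I K ∧ HasGrade3Format K m (Module.finrank Q F₃) := by
  set s := d₁ (v 2)
  set v' : Fin 3 → F₁ := ![v 0, v 1, s • v 2] with hv'
  have hI' (u) : d₁ u ∈ I := hres.range_eq ▸ ⟨u, rfl⟩
  have hs : s ∈ maximalIdeal Q := hI (hI' _)
  have hreg' : IsRegular Q (List.ofFn (d₁ ∘ v')) := by
    simpa [hv'] using isRegular_append_mul_self (rs := [d₁ (v 0), d₁ (v 1)]) (z := s) hreg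
  have hlift' := hlift.smul_last s
  have hresJ := hres.link hlift' hreg'.toIsWeaklyRegular
  set a := d₁ ∘ v'
  have ha (i) : a i ∈ maximalIdeal Q := hI (hI' _)
  have hJ : (Ideal.span (Set.range a)).colon (I : Set Q) ≤ maximalIdeal Q := by
    rw [← hresJ.range_eq]
    rintro _ ⟨ψ, rfl⟩
    simpa using map_mem_maximalIdeal_smul_top ψ (prodMk_mem_maximalIdeal_smul_top
      (Submodule.smul_mem_smul hs (Submodule.mem_top (x := w)))
      (neg_mem (mem_maximalIdeal_smul_top_pi_iff.2 ha)))
  obtain ⟨θ, hθ⟩ := exists_isMinimalMap_dualMap_linkMap_sub hd₃ β₂ hs ha f g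
  obtain ⟨K, hK, hformat⟩ := hresJ.exists_directlyLinked_of_dvd hJ (mem_colon_span_range a) hreg'
    (by simp only [finrank_dual, Module.finrank_prod, Module.finrank_fin_fun]; omega) hs
    (dvd_eval_linkGenerators (by simp [a, hv']) w) hθ
    (hasResidueRank_linearCombination_linkGenerators hfx hfy hgx hgy) hp.dualMap (m := m)
    (n := Module.finrank Q F₃) (by rw [finrank_dual]; omega)
    (by rw [finrank_dual, Module.finrank_prod, Module.finrank_fin_fun]) hn
  exact ⟨K, .head (directlyLinked_colon (fun i ↦ hI' _) hreg') (.single hK), hformat⟩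

end DoubleLink

section Succ

variable {Q : Type*} [CommRing Q] [IsLocalRing Q] [IsNoetherianRing Q] {I : Ideal Q}

theorem HasGrade3Format.exists_linked_succ {m n : ℕ} (h : HasGrade3Format I m n)
    (hm : 2 ≤ m) (hn : 2 ≤ n) : ∃ J, Linked I J ∧ HasGrade3Format J (m + 1) n := by
  obtain ⟨⟨a, ha, hreg⟩, hformat⟩ := h
  obtain ⟨d₁, d₂, d₃, hres, hI, hd₂, hd₃⟩ := hformat.exists_isResolution
  have hrange := hres.range_eq
  let e : Fin 2 → Fin m := Fin.castLE hm
  let x : Fin 2 → Fin n := Fin.castLE hn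
  let t : Fin 3 → Fin m → Q := ![Pi.single (e 0) 1, Pi.single (e 1) 1, 0]
  obtain ⟨v, hv, hregv⟩ := exists_isRegular_ofFn (hrange ▸ hI) (hrange ▸ ha) hreg t
  obtain ⟨β₂, w, hlift⟩ := hres.exists_isKoszulLift v
  have ht : HasResidueRank (Fintype.linearCombination Q t) 2 := by
    convert (hasResidueRank_linearCombination_single (Q := Q) (Fin.castLE_injective hm)).comp
      (i := .id) (j := .id) rfl (q := LinearMap.funLeft Q Q (Fin.castSucc : Fin 2 → Fin 3))
      (s := LinearMap.pi ![LinearMap.proj 0, LinearMap.proj 1, 0]) ?_ using 1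
    · ext i j
      fin_cases i <;>
        simp [t, e, Fintype.linearCombination_apply, Fin.sum_univ_succ, LinearMap.funLeft_apply]
    · ext i j
      fin_cases j <;> simp [LinearMap.funLeft_apply]
  have hv' (i) : ![v 0, v 1, d₁ (v 2) • v 2] i - t i ∈ maximalIdeal Q • (⊤ : Submodule Q _) := by
    fin_cases i
    · exact hv 0
    · exact hv 1
    · have hs : d₁ (v 2) ∈ maximalIdeal Q := hI (hrange ▸ ⟨v 2, rfl⟩)
      simpa [t] using Submodule.smul_mem_smul hs (Submodule.mem_top (x := v 2))
  simpa using hres.exists_linked_of_isKoszulLift hI hd₃ (by simp; omega) hlift hregv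
    (.coprod_linearCombination (θ := 0) (by simpa using hd₂) hv' ht)
    (f := LinearMap.proj (x 0)) (g := LinearMap.proj (x 1)) (x := Pi.single (x 0) 1)
    (y := Pi.single (x 1) 1) (by simp) (by simp [x]) (by simp [x]) (by simp)
    (m := m + 1) (by simp) (by simp; omega)

end Succ

section LinkageClasses

variable {Q : Type*} [CommRing Q] [IsLocalRing Q] {I : Ideal Q} {m n m' n' : ℕ}

/-- The linkage class of `I` contains a grade `3` ideal of format `(1, m, m + n - 1, n)`. -/
def LinkedToFormat (I : Ideal Q) (m n : ℕ) : Prop :=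
  ∃ J, Linked I J ∧ HasGrade3Format J m n

theorem LinkedToFormat.bind (h : LinkedToFormat I m n)
    (h' : ∀ J : Ideal Q, HasGrade3Format J m n → LinkedToFormat J m' n') :
    LinkedToFormat I m' n' := by
  obtain ⟨J, hIJ, hJ⟩ := h
  obtain ⟨K, hJK, hK⟩ := h' J hJ
  exact ⟨K, hIJ.trans hJK, hK⟩

theorem LinkedToFormat.licci (h : LinkedToFormat I m n) (hm : 3 ≤ m) (hn : 1 ≤ n)
    (hlicci : ∀ J : Ideal Q, IsGrade3PerfectOfFormat J m n → Licci J) : Licci I := by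
  obtain ⟨J, hIJ, hJ⟩ := h
  obtain ⟨C, hJC, hC⟩ := hlicci J (isGrade3PerfectOfFormat_iff.2 ⟨hm, hn, hJ⟩)
  exact ⟨C, hIJ.trans hJC, hC⟩

variable [IsNoetherianRing Q]

namespace HasGrade3Format

theorem linkedToFormat_sub_three (h : HasGrade3Format I m n) (hm : 4 ≤ m) :
    ∃ c ≤ 3, LinkedToFormat I (n + 3 - c) (m - 3) := by
  obtain ⟨c, hc, J, hIJ, hJ⟩ := h.exists_directlyLinked_sub_three hm
  exact ⟨c, hc, J, .single hIJ, hJ⟩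

theorem linkedToFormat_of_le_left (h : HasGrade3Format I m n) (hm : 2 ≤ m) (hn : 2 ≤ n)
    (hmm' : m ≤ m') : LinkedToFormat I m' n := by
  induction m', hmm' using Nat.le_induction with
  | base => exact ⟨I, .refl, h⟩
  | succ k hk ih => exact ih.bind fun J hJ ↦ hJ.exists_linked_succ (by omega) hn

-- `(m, n) ⇝ (n + 3 - c, m - 3) ⇝ (n + 4, m - 3) ⇝ (m - c', n + 1) ⇝ (m, n + 1)`
theorem linkedToFormat_succ_right (h : HasGrade3Format I m n) (hm : 5 ≤ m) (hn : 2 ≤ n) :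
    LinkedToFormat I m (n + 1) := by
  obtain ⟨c, hc, h₁⟩ := h.linkedToFormat_sub_three (by omega)
  have h₂ : LinkedToFormat I (n + 4) (m - 3) :=
    h₁.bind fun J hJ ↦ hJ.linkedToFormat_of_le_left (by omega) (by omega) (by omega)
  refine h₂.bind fun J hJ ↦ ?_
  obtain ⟨c', hc', h₃⟩ := hJ.linkedToFormat_sub_three (by omega)
  exact h₃.bind fun K hK ↦ hK.linkedToFormat_of_le_left (by omega) (by omega) (by omega)

theorem linkedToFormat_of_le (h : HasGrade3Format I m n) (hm : 5 ≤ m) (hn : 2 ≤ n)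
    (hmm' : m ≤ m') (hnn' : n ≤ n') : LinkedToFormat I m' n' := by
  induction n', hnn' using Nat.le_induction with
  | base => exact h.linkedToFormat_of_le_left (by omega) hn hmm'
  | succ k hk ih =>
    exact ih.bind fun J hJ ↦ hJ.linkedToFormat_succ_right (hm.trans hmm') (hn.trans hk)

theorem linkedToFormat_five_of_eight_two (h : HasGrade3Format I 8 2) (hn : 5 ≤ n) :
    LinkedToFormat I 5 n := by
  obtain ⟨c, hc, h₁⟩ := h.linkedToFormat_sub_three (by omega)
  have h₂ : LinkedToFormat I 5 5 :=
    h₁.bind fun J hJ ↦ hJ.linkedToFormat_of_le_left (by omega) (by omega) (by omega)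
  exact h₂.bind fun J hJ ↦ hJ.linkedToFormat_of_le le_rfl (by omega) le_rfl hn

end HasGrade3Format

theorem exists_hasGrade3Format_four_three {a : Fin 3 → Q} (ha : IsRegular Q (List.ofFn a)) :
    ∃ I : Ideal Q, HasGrade3Format I 4 3 := by
  obtain ⟨I, -, hI⟩ := (hasGrade3Format_span_range ha).exists_directlyLinked_add_three (by omega)
  exact ⟨I, hI⟩

theorem exists_hasGrade3Format_six_three {a : Fin 3 → Q} (ha : IsRegular Q (List.ofFn a)) :
    ∃ I : Ideal Q, HasGrade3Format I 6 3 := by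
  obtain ⟨J, hJ⟩ := exists_hasGrade3Format_four_three ha
  obtain ⟨I, -, hI⟩ := hJ.linkedToFormat_of_le_left (m' := 6) (by omega) (by omega) (by omega)
  exact ⟨I, hI⟩

theorem exists_hasGrade3Format_eight_two {a : Fin 3 → Q} (ha : IsRegular Q (List.ofFn a)) :
    ∃ I : Ideal Q, HasGrade3Format I 8 2 := by
  obtain ⟨J, hJ⟩ := exists_hasGrade3Format_four_three ha
  obtain ⟨K, -, hK⟩ := hJ.linkedToFormat_of_le_left (m' := 5) (by omega) (by omega) (by omega)
  obtain ⟨c, hc, L, -, hL⟩ := hK.linkedToFormat_sub_three (by omega)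
  obtain ⟨I, -, hI⟩ := hL.linkedToFormat_of_le_left (m' := 8) (by omega) (by omega) (by omega)
  exact ⟨I, hI⟩

end LinkageClasses

theorem le_of_not_dynkin {m n : ℕ} (hm : 3 ≤ m) (hn : 1 ≤ n)
    (h : 2 * (m + n - 1) ≤ (m - 2) * (n + 1)) :
    6 ≤ m ∧ 3 ≤ n ∨ 8 ≤ m ∧ n = 2 ∨ m = 5 ∧ 5 ≤ n := by
  obtain ⟨k, rfl⟩ := Nat.exists_eq_add_of_le hm
  rw [show 3 + k - 2 = k + 1 by omega] at h
  rcases Nat.lt_or_ge k 3 with hk | hk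
  · interval_cases k <;> omega
  · rcases Nat.lt_or_ge n 3 with hn3 | hn3
    · interval_cases n <;> omega
    · omega

theorem linkedToFormat_of_not_dynkin {Q : Type*} [CommRing Q] [IsLocalRing Q] [IsNoetherianRing Q]
    {m n : ℕ} (hm : 3 ≤ m) (hn : 1 ≤ n) (h : 2 * (m + n - 1) ≤ (m - 2) * (n + 1)) :
    (∀ I : Ideal Q, HasGrade3Format I 6 3 → LinkedToFormat I m n) ∨
      ∀ I : Ideal Q, HasGrade3Format I 8 2 → LinkedToFormat I m n := by
  rcases le_of_not_dynkin hm hn h with ⟨hm, hn⟩ | ⟨hm, rfl⟩ | ⟨rfl, hn⟩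
  · exact .inl fun I hI ↦ hI.linkedToFormat_of_le (by omega) (by omega) hm hn
  · exact .inr fun I hI ↦ hI.linkedToFormat_of_le_left (by omega) le_rfl hm
  · exact .inr fun I hI ↦ hI.linkedToFormat_five_of_eight_two hn

/-- **Proposition 2.2.** Let `Q` be a commutative Noetherian local ring.  If there is a
resolution format `f = (1, m, m+n-1, n)` (with `m ≥ 3`, `n ≥ 1`) such that
(1) there exists a grade `3` perfect ideal in `Q` of format `f`,
(2) `f` is not Dynkin, i.e. `2(m+n-1) ≤ (m-2)(n+1)`, and
(3) every grade `3` perfect ideal in `Q` of format `f` is licci,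
then `(1,6,8,3)` (i.e. `(m,n) = (6,3)`) or `(1,8,9,2)` (i.e. `(m,n) = (8,2)`) is such a
format. -/
theorem stmt_8 (Q : Type*) [CommRing Q] [IsNoetherianRing Q] [IsLocalRing Q]
    (h : ∃ m n : ℕ, 3 ≤ m ∧ 1 ≤ n ∧
      (∃ I : Ideal Q, IsGrade3PerfectOfFormat I m n) ∧
      2 * (m + n - 1) ≤ (m - 2) * (n + 1) ∧
      (∀ I : Ideal Q, IsGrade3PerfectOfFormat I m n → Licci I)) :
    ((∃ I : Ideal Q, IsGrade3PerfectOfFormat I 6 3) ∧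
      2 * (6 + 3 - 1) ≤ (6 - 2) * (3 + 1) ∧
      (∀ I : Ideal Q, IsGrade3PerfectOfFormat I 6 3 → Licci I)) ∨
    ((∃ I : Ideal Q, IsGrade3PerfectOfFormat I 8 2) ∧
      2 * (8 + 2 - 1) ≤ (8 - 2) * (2 + 1) ∧
      (∀ I : Ideal Q, IsGrade3PerfectOfFormat I 8 2 → Licci I)) := by
  obtain ⟨m, n, hm, hn, ⟨I, hI⟩, hdynkin, hlicci⟩ := h
  obtain ⟨-, -, ⟨a, -, ha⟩, -⟩ := isGrade3PerfectOfFormat_iff.1 hI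
  obtain ⟨A, hA⟩ := exists_hasGrade3Format_six_three ha
  obtain ⟨B, hB⟩ := exists_hasGrade3Format_eight_two ha
  refine (linkedToFormat_of_not_dynkin (Q := Q) hm hn hdynkin).imp (fun hlink ↦ ?_) fun hlink ↦ ?_
  · refine ⟨⟨A, isGrade3PerfectOfFormat_iff.2 ⟨by omega, by omega, hA⟩⟩, by omega, fun J hJ ↦ ?_⟩
    exact (hlink J (isGrade3PerfectOfFormat_iff.1 hJ).2.2).licci hm hn hlicci
  · refine ⟨⟨B, isGrade3PerfectOfFormat_iff.2 ⟨by omega, by omega, hB⟩⟩, by omega, fun J hJ ↦ ?_⟩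
    exact (hlink J (isGrade3PerfectOfFormat_iff.1 hJ).2.2).licci hm hn hlicci
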